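/- arXiv:2207.02040 — 3 statements merged into one kernel-verified Lean document; each statement's English description precedes it below -/
import Mathlib

section
/- Let n ≥ 9 and let x be an integer with 3 ≤ x ≤ ⌊(n−3)/2⌋. Then the multiset {(x+2)^2, n+2−2x, 3^(n−6), 2^3} is outerplane-unigraphic: there exists an outerplane graph on n vertices with this degree multiset, and any two outerplane graphs on n vertices with this degree multiset are isomorphic. (Type B1 of the paper's Theorem 2, corresponding to the polytope degree sequence p−1, (x+3)^2, p−1−2x+3, 4^(p−7), 3^3 with p = n+1 ≥ 10 and 3 ≤ x ≤ ⌊(p−4)/2⌋.) -/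
/-- The vertices strictly between `a` and `b`, traversing the cycle `ZMod n`
from `a` towards `b` in the direction of increasing residues. -/
def Between (n : ℕ) (a b v : ZMod n) : Prop :=
  0 < (v - a).val ∧ (v - a).val < (b - a).val

/-- `e` is an edge of the standard `n`-cycle on `ZMod n`. -/
def IsCycleEdge (n : ℕ) (e : Sym2 (ZMod n)) : Prop :=
  ∃ i : ZMod n, e = s(i, i + 1)

/-- A chord: an unordered pair of distinct vertices of `ZMod n` that is not an
edge of the standard `n`-cycle. -/
def IsChord (n : ℕ) (e : Sym2 (ZMod n)) : Prop :=
  ¬ e.IsDiag ∧ ¬ IsCycleEdge n e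

/-- Two chords cross if exactly one endpoint of the second lies strictly between
the endpoints of the first (traversing in the direction of increasing residues). -/
def Cross (n : ℕ) (e f : Sym2 (ZMod n)) : Prop :=
  ∀ a b c d : ZMod n, e = s(a, b) → f = s(c, d) →
    Xor' (Between n a b c) (Between n a b d)

/-- `S` is a set of pairwise non-crossing chords of the standard `n`-cycle. -/
def NonCrossingChords (n : ℕ) (S : Set (Sym2 (ZMod n))) : Prop :=
  (∀ e ∈ S, IsChord n e) ∧ ∀ e ∈ S, ∀ f ∈ S, e ≠ f → ¬ Cross n e f

/-- The chord graph of a set `S` of chords: the simple graph on `ZMod n`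
whose edge set is `S`. -/
def chordGraph (n : ℕ) (S : Set (Sym2 (ZMod n))) : SimpleGraph (ZMod n) :=
  SimpleGraph.fromEdgeSet S

/-- A vertex is chord-free for `S` if it is incident to no chord of `S`. -/
def ChordFree (n : ℕ) (S : Set (Sym2 (ZMod n))) (v : ZMod n) : Prop :=
  ∀ e ∈ S, v ∉ e

/-- An outerplane graph on `n` vertices: a simple graph on `ZMod n` whose edge
set is the (disjoint) union of the standard `n`-cycle and a set of pairwise
non-crossing chords. -/
def IsOuterplane (n : ℕ) (G : SimpleGraph (ZMod n)) : Prop :=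
  ∃ S : Set (Sym2 (ZMod n)), NonCrossingChords n S ∧
    G.edgeSet = {e | IsCycleEdge n e} ∪ S

/-- The multiset of vertex degrees of a graph on a finite vertex type. -/
noncomputable def degMultiset {V : Type*} [Fintype V] (G : SimpleGraph V) : Multiset ℕ := by
  classical exact Finset.univ.val.map fun v => G.degree v

/-- The multiset of vertex degrees of a graph on `ZMod n` (junk value for `n = 0`). -/
noncomputable def degreeMultiset (n : ℕ) (G : SimpleGraph (ZMod n)) : Multiset ℕ :=
  if h : n = 0 then 0
  else by haveI : NeZero n := ⟨h⟩; exact degMultiset G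

/-- `M` is outerplane-unigraphic on `n` vertices: there is an outerplane graph on
`n` vertices with degree multiset `M`, and any two such are isomorphic. -/
def OuterplaneUnigraphic (n : ℕ) (M : Multiset ℕ) : Prop :=
  (∃ G : SimpleGraph (ZMod n), IsOuterplane n G ∧ degreeMultiset n G = M) ∧
  ∀ G G' : SimpleGraph (ZMod n), IsOuterplane n G → IsOuterplane n G' →
    degreeMultiset n G = M → degreeMultiset n G' = M → Nonempty (G ≃g G')

/-- A caterpillar: a connected acyclic graph (tree) in which all vertices of
degree at least two lie on a common path. -/
def IsCaterpillar {V : Type*} (G : SimpleGraph V) : Prop :=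
  G.Connected ∧ G.IsAcyclic ∧
    ∃ (u w : V) (p : G.Walk u w), p.IsPath ∧
      ∀ v : V, (∃ a b : V, a ≠ b ∧ G.Adj v a ∧ G.Adj v b) → v ∈ p.support

/-!
Removing the cycle edges leaves the chord degrees `x, x, y, 1^(n-6), 0^3` with `y = n - 2x`. The
degrees of the three hubs sum to `n`, which exceeds the sum `n - 6` of the remaining degrees by
`3 * 2`, so the hubs are pairwise joined and every chord meets a hub. The hubs cut the cycle into
three arcs. As chords do not cross, each arc contains a chord-free vertex; there are only three of
these, so each arc has exactly one, which forces it to be a fan at one of its two ends. A hub at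
which no fan is based has chord degree at most `2`, so the three fans turn in the same direction,
and then the chord degree of a hub is the length of the arc following it. Hence the graph is
determined up to rotations and reflections of the cycle.
The cyclic order is handled by lifting graphs on `ZMod n` to `n`-periodic graphs on `ℤ`.
-/

open Finset

/-! ### Hubs from degree counting -/

section Counting

variable {V : Type*} [Fintype V] [DecidableEq V]

theorem isClique_and_isVertexCover_of_sum_degree_le (G : SimpleGraph V) [DecidableRel G.Adj]
    (T : Finset V) (h : #T * (#T - 1) + ∑ v ∈ Tᶜ, G.degree v ≤ ∑ v ∈ T, G.degree v) :
    G.IsClique T ∧ G.IsVertexCover T := by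
  have degree_split (v : V) : G.degree v = #{w ∈ T | G.Adj v w} + #{w ∈ Tᶜ | G.Adj v w} := by
    rw [← G.card_neighborFinset_eq_degree, G.neighborFinset_eq_filter,
      ← card_union_of_disjoint (disjoint_filter_filter disjoint_compl_right), ← filter_union,
      union_compl]
  have double_count : ∑ v ∈ T, #{w ∈ Tᶜ | G.Adj v w} = ∑ v ∈ Tᶜ, #{w ∈ T | G.Adj v w} := by
    simpa only [bipartiteAbove, bipartiteBelow, G.adj_comm] using
      sum_card_bipartiteAbove_eq_sum_card_bipartiteBelow (s := T) (t := Tᶜ) G.Adj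
  have inside_subset (v : V) : {w ∈ T | G.Adj v w} ⊆ T.erase v := fun w hw ↦ by
    rw [mem_filter] at hw
    exact mem_erase.2 ⟨hw.2.ne', hw.1⟩
  have inside_le (v : V) (hv : v ∈ T) : #{w ∈ T | G.Adj v w} ≤ #T - 1 :=
    (card_le_card (inside_subset v)).trans_eq (card_erase_of_mem hv)
  have sum_inside_le : ∑ v ∈ T, #{w ∈ T | G.Adj v w} ≤ #T * (#T - 1) := by
    simpa using sum_le_sum inside_le
  simp only [degree_split, sum_add_distrib] at h
  have sum_inside_eq : ∑ v ∈ T, #{w ∈ T | G.Adj v w} = ∑ _v ∈ T, (#T - 1) := by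
    rw [sum_const, smul_eq_mul]
    lia
  have sum_outside_eq : ∑ v ∈ Tᶜ, #{w ∈ Tᶜ | G.Adj v w} = 0 := by lia
  constructor
  · intro v hv w hw hvw
    have hcard := (sum_eq_sum_iff_of_le inside_le).1 sum_inside_eq v hv
    rw [← card_erase_of_mem hv] at hcard
    have hmem : w ∈ T.erase v := mem_erase.2 ⟨hvw.symm, hw⟩
    rw [← eq_of_subset_of_card_le (inside_subset v) hcard.ge] at hmem
    exact (mem_filter.1 hmem).2
  · intro v w hadj
    rw [mem_coe, mem_coe, or_iff_not_imp_left]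
    intro hv
    by_contra hw
    have hempty := card_eq_zero.1 (sum_eq_zero_iff.1 sum_outside_eq v (mem_compl.2 hv))
    exact filter_eq_empty_iff.1 hempty (mem_compl.2 hw) hadj

theorem exists_of_map_univ_val_eq_cons_cons_cons {α : Type*} {f : V → α} {a b c : α}
    {M : Multiset α} (h : (univ : Finset V).val.map f = a ::ₘ b ::ₘ c ::ₘ M) :
    ∃ u v w, u ≠ v ∧ u ≠ w ∧ v ≠ w ∧ f u = a ∧ f v = b ∧ f w = c ∧
      ({u, v, w} : Finset V)ᶜ.val.map f = M := by
  simp only [← Multiset.map_eq_cons, ← erase_val, mem_val, mem_erase, mem_univ] at h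
  obtain ⟨u, -, hu, v, ⟨hvu, -⟩, hv, w, ⟨hwv, hwu, -⟩, hw, hM⟩ := h
  refine ⟨u, v, w, hvu.symm, hwu.symm, hwv.symm, hu, hv, hw, ?_⟩
  rw [← hM]
  congr 2
  ext
  simp only [mem_erase, mem_univ, mem_compl, mem_insert, mem_singleton]
  tauto

end Counting

section DegMultiset

variable {V : Type*} [Fintype V]

theorem exists_isClique_isVertexCover_of_degMultiset {G : SimpleGraph V} [DecidableRel G.Adj]
    {a b c : ℕ} (habc : 6 ≤ a + b + c)
    (h : degMultiset G =
      a ::ₘ b ::ₘ c ::ₘ (Multiset.replicate (a + b + c - 6) 1 + Multiset.replicate 3 0)) :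
    ∃ u v w, u ≠ v ∧ u ≠ w ∧ v ≠ w ∧ G.degree u = a ∧ G.degree v = b ∧ G.degree w = c ∧
      G.IsClique {u, v, w} ∧ G.IsVertexCover {u, v, w} := by
  classical
  have degMultiset_eq : degMultiset G = univ.val.map fun v ↦ G.degree v := by
    unfold degMultiset
    congr!
  obtain ⟨u, v, w, huv, huw, hvw, hu, hv, hw, hrest⟩ :=
    exists_of_map_univ_val_eq_cons_cons_cons (degMultiset_eq.symm.trans h)
  refine ⟨u, v, w, huv, huw, hvw, hu, hv, hw, ?_⟩
  have sum_rest : ∑ z ∈ ({u, v, w} : Finset V)ᶜ, G.degree z = a + b + c - 6 := by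
    rw [Finset.sum, hrest]
    simp
  have sum_hubs : ∑ z ∈ ({u, v, w} : Finset V), G.degree z = a + b + c := by
    rw [sum_insert (by simp [huv, huw]), sum_pair hvw, hu, hv, hw, add_assoc]
  have card_hubs : #({u, v, w} : Finset V) = 3 := card_eq_three.2 ⟨u, v, w, huv, huw, hvw, rfl⟩
  have := isClique_and_isVertexCover_of_sum_degree_le G {u, v, w} (by
    rw [sum_rest, sum_hubs, card_hubs]
    lia)
  simpa only [coe_insert, coe_singleton] using this

theorem degMultiset_eq_of_iso {W : Type*} [Fintype W] {G : SimpleGraph V} {G' : SimpleGraph W}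
    (e : G ≃g G') : degMultiset G = degMultiset G' := by
  classical
  rw [degMultiset, degMultiset, ← Multiset.map_univ_val_equiv e.toEquiv, Multiset.map_map]
  exact Multiset.map_congr rfl fun v _ ↦ (e.degree_eq v).symm

theorem ncard_isIsolated (G : SimpleGraph V) :
    {v | G.IsIsolated v}.ncard = (degMultiset G).count 0 := by
  classical
  rw [degMultiset, Multiset.count_map, Set.ncard_eq_toFinset_card']
  simp only [← G.degree_eq_zero, Set.toFinset_ofPred, eq_comm (a := 0), ← filter_val, card_val]

end DegMultiset

/-! ### Outerplane graphs as cycle plus chords -/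

section Outerplane

variable {n : ℕ}

/-- The standard `n`-cycle as a graph; being circulant, it has the rotations and the reflections of
`ZMod n` as automorphisms. -/
abbrev standardCycle (n : ℕ) : SimpleGraph (ZMod n) := SimpleGraph.circulantGraph {1}

theorem standardCycle_eq_fromEdgeSet (n : ℕ) :
    standardCycle n = .fromEdgeSet {e | IsCycleEdge n e} := by
  ext u v
  simp only [SimpleGraph.circulantGraph_adj, SimpleGraph.fromEdgeSet_adj, Set.mem_singleton_iff,
    Set.mem_ofPred_eq, IsCycleEdge, Sym2.eq_iff, sub_eq_iff_eq_add]
  grind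

theorem degree_standardCycle (hn : 3 ≤ n) (v : ZMod n)
    [Fintype ((standardCycle n).neighborSet v)] : (standardCycle n).degree v = 2 := by
  have : Fact (2 < n) := ⟨hn⟩
  have : Nontrivial (ZMod n) := ZMod.nontrivial_iff.2 (by lia)
  have neighborSet_eq : (standardCycle n).neighborSet v = {v + 1, v - 1} := by
    ext u
    simp only [SimpleGraph.mem_neighborSet, SimpleGraph.circulantGraph_adj, Set.mem_insert_iff,
      Set.mem_singleton_iff]
    grind [one_ne_zero (α := ZMod n)]
  have add_ne_sub : v + 1 ≠ v - 1 := by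
    rw [sub_eq_add_neg, Ne, add_right_inj]
    exact ZMod.neg_one_ne_one.symm
  rw [← SimpleGraph.card_neighborSet_eq_degree, ← Nat.card_eq_fintype_card, neighborSet_eq]
  exact Set.ncard_pair add_ne_sub

theorem IsOuterplane.exists_eq_sup {G : SimpleGraph (ZMod n)} (hG : IsOuterplane n G) :
    ∃ S, NonCrossingChords n S ∧ G = standardCycle n ⊔ chordGraph n S := by
  obtain ⟨S, hS, hedge⟩ := hG
  refine ⟨S, hS, ?_⟩
  rw [standardCycle_eq_fromEdgeSet, chordGraph, ← SimpleGraph.fromEdgeSet_union, ← hedge,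
    SimpleGraph.fromEdgeSet_edgeSet]

namespace NonCrossingChords

variable {S : Set (Sym2 (ZMod n))}

theorem isOuterplane_sup (hS : NonCrossingChords n S) (hn : n ≠ 1) :
    IsOuterplane n (standardCycle n ⊔ chordGraph n S) := by
  have : Nontrivial (ZMod n) := ZMod.nontrivial_iff.2 hn
  refine ⟨S, hS, ?_⟩
  rw [standardCycle_eq_fromEdgeSet, chordGraph, ← SimpleGraph.fromEdgeSet_union,
    SimpleGraph.edgeSet_fromEdgeSet, sdiff_eq_left, Set.disjoint_left]
  rintro e (⟨i, rfl⟩ | he)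
  · simp
  · exact (hS.1 e he).1

theorem disjoint_standardCycle (hS : NonCrossingChords n S) :
    Disjoint (standardCycle n) (chordGraph n S) := by
  rw [standardCycle_eq_fromEdgeSet, chordGraph, SimpleGraph.disjoint_fromEdgeSet,
    SimpleGraph.edgeSet_fromEdgeSet, Set.disjoint_left]
  exact fun e he heS ↦ (hS.1 e heS).2 he.1

theorem degreeMultiset_standardCycle_sup (hS : NonCrossingChords n S) [NeZero n] (hn : 3 ≤ n) :
    degreeMultiset n (standardCycle n ⊔ chordGraph n S) =
      (degMultiset (chordGraph n S)).map (· + 2) := by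
  classical
  rw [degreeMultiset, dif_neg (NeZero.ne n), degMultiset, degMultiset, Multiset.map_map]
  refine Multiset.map_congr rfl fun v _ ↦ ?_
  have card_eq := congrArg card
    (SimpleGraph.neighborFinset_sup_of_disjoint v hS.disjoint_standardCycle)
  simp only [card_disjUnion, SimpleGraph.card_neighborFinset_eq_degree,
    degree_standardCycle hn] at card_eq
  rw [Function.comp_apply, add_comm, ← card_eq]
  congr!

end NonCrossingChords

end Outerplane

/-! ### Periodic graphs on `ℤ` -/

section Unrolled

variable {n p q r : ℤ} {H : SimpleGraph ℤ}

/-- The lift to the universal cover `ℤ` of the `n`-cycle of a set of pairwise non-crossing chords: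
an `n`-periodic graph in which consecutive integers are not joined and no two edges interleave
within one period. -/
structure IsUnrolledDissection (n : ℤ) (H : SimpleGraph ℤ) : Prop where
  periodic : ∀ i, Function.Periodic (H.Adj i) n
  not_adj_add_one : ∀ i, ¬ H.Adj i (i + 1)
  not_adj_of_interleaved : ∀ ⦃a b c d⦄, a < c → c < b → b < d → d < a + n →
    H.Adj a b → ¬ H.Adj c d

/-- The mirror image of a graph on `ℤ`, used to exchange the two directions around the cycle. -/
abbrev reflect (H : SimpleGraph ℤ) : SimpleGraph ℤ := H.comap Neg.neg

/-- The arc `[p, q]` is a fan based at its left end: its edges are exactly those joining `p` to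
the vertices other than `p + 1`. -/
def IsForwardFan (H : SimpleGraph ℤ) (p q : ℤ) : Prop :=
  ∀ ⦃i j⦄, p ≤ i → i < j → j ≤ q → (H.Adj i j ↔ i = p ∧ p + 2 ≤ j)

/-- The arc `[p, q]` is a fan based at its right end: its edges are exactly those joining `q` to
the vertices other than `q - 1`. -/
def IsBackwardFan (H : SimpleGraph ℤ) (p q : ℤ) : Prop :=
  ∀ ⦃i j⦄, p ≤ i → i < j → j ≤ q → (H.Adj i j ↔ j = q ∧ i + 2 ≤ q)

/-- An arc `[p, q]` of the cycle cut off by an edge between two hubs `p` and `q`, with no edge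
between its interior vertices. -/
structure IsHubArc (n : ℤ) (H : SimpleGraph ℤ) (p q : ℤ) : Prop where
  lt : p < q
  lt_add : q < p + n
  adj : H.Adj p q
  not_adj : ∀ ⦃i j⦄, p < i → i < j → j < q → ¬ H.Adj i j

/-- Three hubs cutting the cycle into three hub arcs. -/
structure IsHubTriangle (n : ℤ) (H : SimpleGraph ℤ) (p q r : ℤ) : Prop where
  first : IsHubArc n H p q
  second : IsHubArc n H q r
  third : IsHubArc n H r (p + n)

/-- The triangulation made of a triangle `p, q, r` with a forward fan erected on each side. -/
structure IsPinwheel (n : ℤ) (H : SimpleGraph ℤ) (p q r : ℤ) : Prop where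
  add_two_le_first : p + 2 ≤ q
  add_two_le_second : q + 2 ≤ r
  add_two_le_third : r + 2 ≤ p + n
  first : IsForwardFan H p q
  second : IsForwardFan H q r
  third : IsForwardFan H r (p + n)

theorem reflect_reflect (H : SimpleGraph ℤ) : reflect (reflect H) = H := by
  ext i j
  simp only [SimpleGraph.comap_adj, neg_neg]

theorem isIsolated_reflect_iff {v : ℤ} : (reflect H).IsIsolated v ↔ H.IsIsolated (-v) := by
  refine ⟨fun h w ↦ ?_, fun h w ↦ h (-w)⟩
  simpa using h (-w)

theorem isForwardFan_reflect_iff :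
    IsForwardFan (reflect H) p q ↔ IsBackwardFan H (-q) (-p) := by
  constructor <;> intro h i j hi hij hj
  · have := h (i := -j) (j := -i) (by lia) (by lia) (by lia)
    simp only [SimpleGraph.comap_adj, neg_neg, H.adj_comm j i] at this
    rw [this]
    lia
  · rw [SimpleGraph.comap_adj, H.adj_comm, h (by lia) (by lia) (by lia)]
    lia

namespace IsUnrolledDissection

theorem adj_add_right_iff (hH : IsUnrolledDissection n H) (i j : ℤ) :
    H.Adj i (j + n) ↔ H.Adj i j :=
  (hH.periodic i j).to_iff

theorem adj_add_left_iff (hH : IsUnrolledDissection n H) (i j : ℤ) :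
    H.Adj (i + n) j ↔ H.Adj i j := by
  rw [H.adj_comm, hH.adj_add_right_iff, H.adj_comm]

theorem adj_toIcoMod_iff (hH : IsUnrolledDissection n H) (hn : 0 < n) (m i j : ℤ) :
    H.Adj (toIcoMod hn m i) (toIcoMod hn m j) ↔ H.Adj i j := by
  rw [toIcoMod, toIcoMod, (hH.periodic _).sub_zsmul_eq, H.adj_comm, (hH.periodic _).sub_zsmul_eq,
    H.adj_comm]

theorem reflect (hH : IsUnrolledDissection n H) : IsUnrolledDissection n (reflect H) where
  periodic i j := by
    rw [SimpleGraph.comap_adj, SimpleGraph.comap_adj, ← hH.adj_add_right_iff]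
    congr 1
    ring
  not_adj_add_one i h := hH.not_adj_add_one (-(i + 1)) (by simpa using h.symm)
  not_adj_of_interleaved a b c d hac hcb hbd hda hab hcd :=
    hH.not_adj_of_interleaved (a := -d) (b := -c) (c := -b) (d := -a) (by lia) (by lia) (by lia)
      (by lia) hcd.symm hab.symm

theorem translate (hH : IsUnrolledDissection n H) (a : ℤ) :
    IsUnrolledDissection n (H.comap (a + ·)) where
  periodic i j := by
    rw [SimpleGraph.comap_adj, SimpleGraph.comap_adj, ← add_assoc, hH.periodic]
  not_adj_add_one i h := hH.not_adj_add_one (a + i) (by simpa [add_assoc] using h)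
  not_adj_of_interleaved i j k l hik hkj hjl hli hij :=
    hH.not_adj_of_interleaved (by lia) (by lia) (by lia) (by lia) hij

theorem isForwardFan_add_period_iff (hH : IsUnrolledDissection n H) :
    IsForwardFan H (p + n) (q + n) ↔ IsForwardFan H p q := by
  constructor <;> intro h i j hi hij hj
  · rw [← hH.adj_add_left_iff, ← hH.adj_add_right_iff, h (by lia) (by lia) (by lia)]
    lia
  · rw [← sub_add_cancel i n, ← sub_add_cancel j n, hH.adj_add_left_iff, hH.adj_add_right_iff,
      h (by lia) (by lia) (by lia)]
    lia

theorem isHubArc_add_period (hH : IsUnrolledDissection n H) (h : IsHubArc n H p q) :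
    IsHubArc n H (p + n) (q + n) where
  lt := by linarith [h.lt]
  lt_add := by linarith [h.lt_add]
  adj := by simpa only [hH.adj_add_left_iff, hH.adj_add_right_iff] using h.adj
  not_adj i j hi hij hj := by
    rw [← sub_add_cancel i n, ← sub_add_cancel j n, hH.adj_add_left_iff, hH.adj_add_right_iff]
    exact h.not_adj (by lia) (by lia) (by lia)

end IsUnrolledDissection

namespace IsHubArc

theorem reflect (h : IsHubArc n H p q) : IsHubArc n (reflect H) (-q) (-p) where
  lt := by linarith [h.lt]
  lt_add := by linarith [h.lt_add]
  adj := by simpa using h.adj.symm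
  not_adj i j hi hij hj hadj := h.not_adj (by lia) (by lia) (by lia) hadj.symm

theorem add_two_le (h : IsHubArc n H p q) (hH : IsUnrolledDissection n H) : p + 2 ≤ q := by
  have hne : q ≠ p + 1 := by
    rintro rfl
    exact hH.not_adj_add_one p h.adj
  have := h.lt
  lia

theorem adj_left_or_adj_right (h : IsHubArc n H p q) (hH : IsUnrolledDissection n H) {v : ℤ}
    (hpv : p < v) (hvq : v < q) (hv : ¬ H.IsIsolated v) : H.Adj p v ∨ H.Adj v q := by
  obtain ⟨w, hvw⟩ : ∃ w, H.Adj v w := by simpa [SimpleGraph.IsIsolated] using hv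
  have hn : 0 < n := by linarith [h.lt, h.lt_add]
  obtain ⟨j, ⟨hpj, hjn⟩, hj⟩ := (hH.periodic v).exists_mem_Ico hn w p
  replace hj : H.Adj v j := hj ▸ hvw
  rcases hpj.eq_or_lt with rfl | hpj
  · exact .inl hj.symm
  rcases lt_trichotomy j q with hjq | rfl | hqj
  · rcases hj.ne.lt_or_gt with hlt | hgt
    · exact absurd hj (h.not_adj hpv hlt hjq)
    · exact absurd hj.symm (h.not_adj hpj hgt hvq)
  · exact .inr hj
  · exact absurd hj (hH.not_adj_of_interleaved hpv hvq hqj hjn h.adj)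

theorem not_adj_left_of_adj (h : IsHubArc n H p q) (hH : IsUnrolledDissection n H)
    (hadj : H.Adj (p + 1) q) {v : ℤ} (hvq : v < q) (hpv : p < v) : ¬ H.Adj p v := by
  intro hv
  obtain rfl | hlt := (show p + 1 ≤ v from hpv).eq_or_lt
  · exact hH.not_adj_add_one p hv
  · exact hH.not_adj_of_interleaved (by lia) hlt hvq h.lt_add hv hadj

theorem isIsolated_right_of_adj (h : IsHubArc n H p q) (hH : IsUnrolledDissection n H)
    (hadj : H.Adj (p + 1) q) : H.IsIsolated (q - 1) := by
  have := h.add_two_le hH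
  by_contra hq
  rcases h.adj_left_or_adj_right hH (by lia) (by lia) hq with hp | hq
  · exact h.not_adj_left_of_adj hH hadj (by lia) (by lia) hp
  · exact hH.not_adj_add_one (q - 1) (by simpa using hq)

theorem isIsolated_left_of_not_adj (h : IsHubArc n H p q) (hH : IsUnrolledDissection n H)
    (hadj : ¬ H.Adj (p + 1) q) : H.IsIsolated (p + 1) := by
  have := h.add_two_le hH
  by_contra hp
  rcases h.adj_left_or_adj_right hH (by lia) (by lia) hp with hp | hq
  · exact hH.not_adj_add_one p hp
  · exact hadj hq

theorem exists_isIsolated (h : IsHubArc n H p q) (hH : IsUnrolledDissection n H) :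
    ∃ v, p < v ∧ v < q ∧ H.IsIsolated v := by
  have := h.add_two_le hH
  by_cases hadj : H.Adj (p + 1) q
  · exact ⟨q - 1, by lia, by lia, h.isIsolated_right_of_adj hH hadj⟩
  · exact ⟨p + 1, by lia, by lia, h.isIsolated_left_of_not_adj hH hadj⟩

theorem isBackwardFan_of_adj (h : IsHubArc n H p q) (hH : IsUnrolledDissection n H)
    (hsub : {v ∈ Set.Ioo p q | H.IsIsolated v}.Subsingleton) (hadj : H.Adj (p + 1) q) :
    IsBackwardFan H p q := by
  have htwo := h.add_two_le hH
  have isolated_eq {v : ℤ} (hpv : p < v) (hvq : v < q) (hv : H.IsIsolated v) : v = q - 1 :=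
    hsub ⟨⟨hpv, hvq⟩, hv⟩ ⟨⟨by lia, by lia⟩, h.isIsolated_right_of_adj hH hadj⟩
  intro i j hpi hij hjq
  rcases hpi.eq_or_lt with rfl | hpi
  · rcases hjq.eq_or_lt with rfl | hjq
    · simpa [htwo] using h.adj
    · simpa [hjq.ne] using h.not_adj_left_of_adj hH hadj hjq hij
  rcases hjq.eq_or_lt with rfl | hjq
  · constructor
    · intro hadj_i
      have : j ≠ i + 1 := by
        rintro rfl
        exact hH.not_adj_add_one i hadj_i
      lia
    · rintro ⟨-, hi⟩
      have hiso : ¬ H.IsIsolated i := fun hiso ↦ by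
        have := isolated_eq hpi hij hiso
        lia
      exact (h.adj_left_or_adj_right hH hpi hij hiso).resolve_left
        (h.not_adj_left_of_adj hH hadj hij hpi)
  · simpa [hjq.ne] using h.not_adj hpi hij hjq

theorem isForwardFan_of_adj (h : IsHubArc n H p q) (hH : IsUnrolledDissection n H)
    (hsub : {v ∈ Set.Ioo p q | H.IsIsolated v}.Subsingleton) (hadj : H.Adj p (q - 1)) :
    IsForwardFan H p q := by
  rw [← reflect_reflect H, isForwardFan_reflect_iff]
  refine h.reflect.isBackwardFan_of_adj hH.reflect ?_ ?_
  · rintro v ⟨⟨hqv, hvp⟩, hv⟩ w ⟨⟨hqw, hwp⟩, hw⟩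
    rw [isIsolated_reflect_iff] at hv hw
    exact neg_injective (hsub ⟨⟨by lia, by lia⟩, hv⟩ ⟨⟨by lia, by lia⟩, hw⟩)
  · simpa [sub_eq_add_neg, add_comm] using hadj.symm

theorem isForwardFan_or_isBackwardFan (h : IsHubArc n H p q) (hH : IsUnrolledDissection n H)
    (hsub : {v ∈ Set.Ioo p q | H.IsIsolated v}.Subsingleton) :
    IsForwardFan H p q ∨ IsBackwardFan H p q := by
  have htwo := h.add_two_le hH
  by_cases hleft : H.Adj (p + 1) q
  · exact .inr (h.isBackwardFan_of_adj hH hsub hleft)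
  by_cases hright : H.Adj p (q - 1)
  · exact .inl (h.isForwardFan_of_adj hH hsub hright)
  have hp : H.IsIsolated (p + 1) := h.isIsolated_left_of_not_adj hH hleft
  have hq : H.IsIsolated (q - 1) := by
    rw [← reflect_reflect H, isIsolated_reflect_iff, neg_sub, sub_eq_add_neg, add_comm]
    refine h.reflect.isIsolated_left_of_not_adj hH.reflect fun hadj ↦ hright ?_
    simpa [sub_eq_add_neg, add_comm] using hadj.symm
  have hpq : p + 1 = q - 1 := hsub ⟨⟨by lia, by lia⟩, hp⟩ ⟨⟨by lia, by lia⟩, hq⟩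
  refine .inl fun i j hi hij hj ↦ ?_
  rcases hi.eq_or_lt with rfl | hi
  · rcases hj.eq_or_lt with rfl | hj
    · simpa [htwo] using h.adj
    · obtain rfl : j = p + 1 := by lia
      simpa using hH.not_adj_add_one p
  · obtain ⟨rfl, rfl⟩ : i = p + 1 ∧ j = p + 1 + 1 := by lia
    simpa using hH.not_adj_add_one (p + 1)

end IsHubArc

/-- The number of translation classes of neighbours of `i` in an `n`-periodic graph on `ℤ`, that
is, the degree of the class of `i` in the quotient graph. -/
noncomputable def periodDegree (n : ℤ) (H : SimpleGraph ℤ) (i : ℤ) : ℕ :=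
  {j ∈ Set.Ico i (i + n) | H.Adj i j}.ncard

namespace IsHubTriangle

theorem rotate (h : IsHubTriangle n H p q r) (hH : IsUnrolledDissection n H) :
    IsHubTriangle n H q r (p + n) where
  first := h.second
  second := h.third
  third := hH.isHubArc_add_period h.first

theorem isForwardFan_or_isBackwardFan (h : IsHubTriangle n H p q r)
    (hH : IsUnrolledDissection n H) (hcard : {v ∈ Set.Ico p (p + n) | H.IsIsolated v}.ncard ≤ 3) :
    (IsForwardFan H p q ∨ IsBackwardFan H p q) ∧ (IsForwardFan H q r ∨ IsBackwardFan H q r) ∧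
      (IsForwardFan H r (p + n) ∨ IsBackwardFan H r (p + n)) := by
  have hqr := h.second.lt
  obtain ⟨u, hpu, huq, hu⟩ := h.first.exists_isIsolated hH
  obtain ⟨v, hqv, hvr, hv⟩ := h.second.exists_isIsolated hH
  obtain ⟨w, hrw, hwp, hw⟩ := h.third.exists_isIsolated hH
  have isolated_eq : {u, v, w} = {v ∈ Set.Ico p (p + n) | H.IsIsolated v} := by
    refine Set.eq_of_subset_of_ncard_le ?_ ?_
      ((Set.finite_Ico p (p + n)).subset (Set.sep_subset _ _))
    · rintro _ (rfl | rfl | rfl)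
      exacts [⟨⟨by lia, by lia⟩, hu⟩, ⟨⟨by lia, by lia⟩, hv⟩, ⟨⟨by lia, by lia⟩, hw⟩]
    · rwa [Set.ncard_eq_three.2 ⟨u, v, w, by lia, by lia, by lia, rfl⟩]
  have eq_of_isolated {i : ℤ} (hpi : p ≤ i) (hin : i < p + n) (hi : H.IsIsolated i) :
      i = u ∨ i = v ∨ i = w :=
    isolated_eq.symm.subset ⟨⟨hpi, hin⟩, hi⟩
  refine ⟨h.first.isForwardFan_or_isBackwardFan hH ?_,
    h.second.isForwardFan_or_isBackwardFan hH ?_, h.third.isForwardFan_or_isBackwardFan hH ?_⟩ <;>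
  · rintro i ⟨⟨hi₁, hi₂⟩, hi⟩ j ⟨⟨hj₁, hj₂⟩, hj⟩
    have := eq_of_isolated (by lia) (by lia) hi
    have := eq_of_isolated (by lia) (by lia) hj
    lia

theorem adj_iff_eq_of_isForwardFan (h : IsHubTriangle n H p q r) (hH : IsUnrolledDissection n H)
    (hfan : IsForwardFan H r (p + n)) {j : ℤ} (hqj : q < j) (hjp : j < p + n) :
    H.Adj p j ↔ j = r := by
  have hpq := h.first.lt
  have hrp := h.third.add_two_le hH
  rcases lt_or_ge j r with hjr | hrj
  · have hpj : ¬ H.Adj p j := fun hpj ↦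
      hH.not_adj_of_interleaved hpq hqj hjr (by lia) hpj h.second.adj
    exact iff_of_false hpj hjr.ne
  · rw [← hH.adj_add_left_iff, H.adj_comm, hfan hrj hjp le_rfl]
    exact and_iff_left hrp

theorem periodDegree_le_two (h : IsHubTriangle n H p q r) (hH : IsUnrolledDissection n H)
    (hfirst : IsBackwardFan H p q) (hthird : IsForwardFan H r (p + n)) :
    periodDegree n H p ≤ 2 := by
  calc periodDegree n H p ≤ ({q, r} : Set ℤ).ncard := by
        refine Set.ncard_le_ncard ?_
        rintro j ⟨⟨hpj, hjp⟩, hj⟩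
        rcases le_or_gt j q with hjq | hqj
        · exact .inl ((hfirst le_rfl (hpj.lt_of_ne hj.ne) hjq).1 hj).1
        · exact .inr ((h.adj_iff_eq_of_isForwardFan hH hthird hqj hjp).1 hj)
    _ ≤ 2 := (Set.ncard_insert_le q {r}).trans_eq (by rw [Set.ncard_singleton])

theorem isPinwheel_or_isPinwheel_reflect (h : IsHubTriangle n H p q r)
    (hH : IsUnrolledDissection n H) (hcard : {v ∈ Set.Ico p (p + n) | H.IsIsolated v}.ncard ≤ 3)
    (hp : 3 ≤ periodDegree n H p) (hq : 3 ≤ periodDegree n H q) (hr : 3 ≤ periodDegree n H r) :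
    IsPinwheel n H p q r ∨ IsPinwheel n (reflect H) (-p) (n - r) (n - q) := by
  have first_two_le := h.first.add_two_le hH
  have second_two_le := h.second.add_two_le hH
  have third_two_le := h.third.add_two_le hH
  have not_both_p (hB : IsBackwardFan H p q) (hF : IsForwardFan H r (p + n)) : False := by
    linarith [h.periodDegree_le_two hH hB hF]
  have not_both_q (hB : IsBackwardFan H q r) (hF : IsForwardFan H p q) : False := by
    linarith [(h.rotate hH).periodDegree_le_two hH hB (hH.isForwardFan_add_period_iff.2 hF)]
  have not_both_r (hB : IsBackwardFan H r (p + n)) (hF : IsForwardFan H q r) : False := by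
    linarith [((h.rotate hH).rotate hH).periodDegree_le_two hH hB
      (hH.isForwardFan_add_period_iff.2 hF)]
  have reflected_fan {i j : ℤ} (hB : IsBackwardFan H i j) :
      IsForwardFan (reflect H) (n - j) (n - i) := by
    rw [sub_eq_neg_add, sub_eq_neg_add, hH.reflect.isForwardFan_add_period_iff,
      isForwardFan_reflect_iff, neg_neg, neg_neg]
    exact hB
  obtain ⟨hF₁ | hB₁, h₂, h₃⟩ := h.isForwardFan_or_isBackwardFan hH hcard
  · have hF₂ := h₂.resolve_right fun hB₂ ↦ not_both_q hB₂ hF₁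
    have hF₃ := h₃.resolve_right fun hB₃ ↦ not_both_r hB₃ hF₂
    exact .inl ⟨first_two_le, second_two_le, third_two_le, hF₁, hF₂, hF₃⟩
  · have hB₃ := h₃.resolve_left fun hF₃ ↦ not_both_p hB₁ hF₃
    have hB₂ := h₂.resolve_left fun hF₂ ↦ not_both_r hB₃ hF₂
    refine .inr ⟨by lia, by lia, by lia, ?_, reflected_fan hB₂, ?_⟩
    · simpa using reflected_fan hB₃
    · simpa [sub_eq_neg_add] using reflected_fan hB₁

end IsHubTriangle

/-- The edges `{i, j}`, `i < j`, of a pinwheel on the hubs `p < q < r` within the period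
`[p, p + n)`. -/
def IsPinwheelChord (n p q r i j : ℤ) : Prop :=
  (i = p ∧ p + 2 ≤ j ∧ j ≤ q) ∨ (i = q ∧ q + 2 ≤ j ∧ j ≤ r) ∨ (i = r ∧ r + 2 ≤ j ∧ j < p + n) ∨
    (i = p ∧ j = r)

theorem IsForwardFan.isHubArc (h : IsForwardFan H p q) (htwo : p + 2 ≤ q) (hlt : q < p + n) :
    IsHubArc n H p q where
  lt := by lia
  lt_add := hlt
  adj := (h le_rfl (by lia) le_rfl).2 ⟨rfl, htwo⟩
  not_adj i j hi hij hj hadj := hi.ne' ((h hi.le hij hj.le).1 hadj).1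

theorem IsForwardFan.translate (h : IsForwardFan H p q) (a : ℤ) :
    IsForwardFan (H.comap (a + ·)) (p - a) (q - a) := by
  intro i j hi hij hj
  rw [SimpleGraph.comap_adj, h (by lia) (by lia) (by lia)]
  lia

namespace IsPinwheel

theorem rotate (h : IsPinwheel n H p q r) (hH : IsUnrolledDissection n H) :
    IsPinwheel n H q r (p + n) where
  add_two_le_first := h.add_two_le_second
  add_two_le_second := h.add_two_le_third
  add_two_le_third := by linarith [h.add_two_le_first]
  first := h.second
  second := h.third
  third := hH.isForwardFan_add_period_iff.2 h.first

theorem translate (h : IsPinwheel n H p q r) :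
    IsPinwheel n (H.comap (p + ·)) 0 (q - p) (r - p) := by
  obtain ⟨hpq, hqr, hrp, h₁, h₂, h₃⟩ := h
  refine ⟨by lia, by lia, by lia, ?_, h₂.translate p, ?_⟩
  · simpa using h₁.translate p
  · simpa using h₃.translate p

theorem isHubTriangle (h : IsPinwheel n H p q r) : IsHubTriangle n H p q r := by
  obtain ⟨hpq, hqr, hrp, h₁, h₂, h₃⟩ := h
  exact ⟨h₁.isHubArc hpq (by lia), h₂.isHubArc hqr (by lia), h₃.isHubArc hrp (by lia)⟩

theorem adj_iff (h : IsPinwheel n H p q r) (hH : IsUnrolledDissection n H) {i j : ℤ}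
    (hpi : p ≤ i) (hij : i < j) (hjp : j < p + n) :
    H.Adj i j ↔ IsPinwheelChord n p q r i j := by
  obtain ⟨hpq, hqr, -, h₁, h₂, h₃⟩ := id h
  have htri := h.isHubTriangle
  unfold IsPinwheelChord
  rcases hpi.eq_or_lt with rfl | hpi
  · rcases le_or_gt j q with hjq | hqj
    · rw [h₁ le_rfl hij hjq]
      lia
    · rw [htri.adj_iff_eq_of_isForwardFan hH h₃ hqj hjp]
      lia
  rcases lt_trichotomy i q with hiq | rfl | hqi
  · refine iff_of_false (fun hadj ↦ ?_) (by lia)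
    rcases le_or_gt j q with hjq | hqj
    · exact hpi.ne' ((h₁ hpi.le hij hjq).1 hadj).1
    · exact hH.not_adj_of_interleaved hpi hiq hqj hjp htri.first.adj hadj
  · rcases le_or_gt j r with hjr | hrj
    · rw [h₂ le_rfl hij hjr]
      lia
    · rw [(htri.rotate hH).adj_iff_eq_of_isForwardFan hH (h.rotate hH).third hrj (by lia)]
      lia
  rcases lt_or_ge i r with hir | hri
  · refine iff_of_false (fun hadj ↦ ?_) (by lia)
    rcases le_or_gt j r with hjr | hrj
    · exact hqi.ne' ((h₂ hqi.le hij hjr).1 hadj).1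
    · exact hH.not_adj_of_interleaved hqi hir hrj (by lia) htri.second.adj hadj
  · rw [h₃ hri hij hjp.le]
    lia

theorem eq_of_isPinwheel {H' : SimpleGraph ℤ} (h : IsPinwheel n H p q r)
    (hH : IsUnrolledDissection n H) (h' : IsPinwheel n H' p q r)
    (hH' : IsUnrolledDissection n H') : H = H' := by
  have hn : 0 < n := by linarith [h.add_two_le_first, h.add_two_le_second, h.add_two_le_third]
  have adj_iff_of_lt {i j : ℤ} (hpi : p ≤ i) (hij : i < j) (hjp : j < p + n) :
      H.Adj i j ↔ H'.Adj i j :=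
    (h.adj_iff hH hpi hij hjp).trans (h'.adj_iff hH' hpi hij hjp).symm
  ext i j
  rw [← hH.adj_toIcoMod_iff hn p, ← hH'.adj_toIcoMod_iff hn p]
  obtain ⟨hpi, hip⟩ := toIcoMod_mem_Ico hn p i
  obtain ⟨hpj, hjp⟩ := toIcoMod_mem_Ico hn p j
  rcases lt_trichotomy (toIcoMod hn p i) (toIcoMod hn p j) with hlt | heq | hgt
  · exact adj_iff_of_lt hpi hlt hjp
  · simp only [heq, SimpleGraph.irrefl]
  · rw [H.adj_comm, H'.adj_comm, adj_iff_of_lt hpj hgt hip]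

theorem periodDegree_left (h : IsPinwheel n H p q r) (hH : IsUnrolledDissection n H) :
    periodDegree n H p = (q - p).toNat := by
  obtain ⟨hpq, hqr, hrp, -⟩ := id h
  have neighbours_eq :
      {j ∈ Set.Ico p (p + n) | H.Adj p j} = insert r (Set.Icc (p + 2) q) := by
    ext j
    simp only [Set.mem_ofPred_eq, Set.mem_Ico, Set.mem_insert_iff, Set.mem_Icc]
    rcases eq_or_ne j p with rfl | hne
    · simp only [SimpleGraph.irrefl]
      lia
    · constructor
      · rintro ⟨⟨hpj, hjp⟩, hadj⟩
        rw [h.adj_iff hH le_rfl (by lia) hjp, IsPinwheelChord] at hadj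
        lia
      · intro hj
        refine ⟨by lia, (h.adj_iff hH le_rfl (by lia) (by lia)).2 ?_⟩
        unfold IsPinwheelChord
        lia
  rw [periodDegree, neighbours_eq, Set.ncard_insert_of_notMem (by simp; lia),
    Set.ncard_eq_toFinset_card', Set.toFinset_Icc, Int.card_Icc]
  lia

theorem periodDegree_of_mem_Ioo (h : IsPinwheel n H p q r) (hH : IsUnrolledDissection n H)
    {v : ℤ} (hpv : p < v) (hvq : v < q) :
    periodDegree n H v = if p + 2 ≤ v then 1 else 0 := by
  obtain ⟨-, hqr, hrp, h₁, -⟩ := id h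
  have neighbours_eq :
      {j ∈ Set.Ico v (v + n) | H.Adj v j} = if p + 2 ≤ v then {p + n} else ∅ := by
    ext j
    have mem_iff : j ∈ (if p + 2 ≤ v then {p + n} else ∅ : Set ℤ) ↔ j = p + n ∧ p + 2 ≤ v := by
      split_ifs with hv <;> simp [hv]
    rw [mem_iff, Set.mem_sep_iff, Set.mem_Ico]
    constructor
    · rintro ⟨⟨hvj, hjv⟩, hadj⟩
      rcases lt_or_ge j (p + n) with hjp | hpj
      · have := (h.adj_iff hH hpv.le (hvj.lt_of_ne hadj.ne) hjp).1 hadj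
        unfold IsPinwheelChord at this
        lia
      · rw [← sub_add_cancel j n, hH.adj_add_right_iff, H.adj_comm,
          h₁ (by lia) (by lia) hvq.le] at hadj
        lia
    · rintro ⟨rfl, hv⟩
      rw [hH.adj_add_right_iff, H.adj_comm, h₁ le_rfl hpv hvq.le]
      lia
  rw [periodDegree, neighbours_eq]
  split_ifs <;> simp

theorem map_periodDegree_Ico_first (h : IsPinwheel n H p q r) (hH : IsUnrolledDissection n H) :
    (Multiset.Ico p q).map (periodDegree n H) =
      (q - p).toNat ::ₘ 0 ::ₘ Multiset.replicate (q - p - 2).toNat 1 := by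
  have hpq := h.add_two_le_first
  have interior_eq : (Ico (p + 1 + 1) q).val.map (periodDegree n H) =
      Multiset.replicate (q - p - 2).toNat 1 := by
    rw [Multiset.map_congr rfl fun v hv ↦ ?_, Multiset.map_const', card_val, Int.card_Ico]
    · congr 2
      ring
    · rw [mem_val, mem_Ico] at hv
      rw [h.periodDegree_of_mem_Ioo hH (by lia) hv.2, if_pos (by lia)]
  rw [Multiset.Ico, ← insert_Ico_add_one_left_eq_Ico (by lia : p < q),
    ← insert_Ico_add_one_left_eq_Ico (by lia : p + 1 < q), insert_val_of_notMem (by simp),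
    insert_val_of_notMem (by simp), Multiset.map_cons, Multiset.map_cons, interior_eq,
    h.periodDegree_left hH, h.periodDegree_of_mem_Ioo hH (by lia) (by lia), if_neg (by lia)]

theorem map_periodDegree_Ico (h : IsPinwheel n H p q r) (hH : IsUnrolledDissection n H) :
    (Multiset.Ico p (p + n)).map (periodDegree n H) =
      (q - p).toNat ::ₘ (r - q).toNat ::ₘ (p + n - r).toNat ::ₘ
        (Multiset.replicate (n - 6).toNat 1 + Multiset.replicate 3 0) := by
  obtain ⟨hpq, hqr, hrp, -⟩ := id h
  have Ico_split :
      Multiset.Ico p (p + n) = Multiset.Ico p q + Multiset.Ico q r + Multiset.Ico r (p + n) := by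
    rw [Multiset.Ico_add_Ico_eq_Ico (by lia) (by lia),
      Multiset.Ico_add_Ico_eq_Ico (by lia) (by lia)]
  have card_split : (n - 6).toNat =
      (q - p - 2).toNat + (r - q - 2).toNat + (p + n - r - 2).toNat := by
    lia
  rw [Ico_split, Multiset.map_add, Multiset.map_add, h.map_periodDegree_Ico_first hH,
    (h.rotate hH).map_periodDegree_Ico_first hH,
    ((h.rotate hH).rotate hH).map_periodDegree_Ico_first hH, card_split, Multiset.replicate_add,
    Multiset.replicate_add]
  simp only [← Multiset.singleton_add, Multiset.replicate_succ, Multiset.replicate_zero]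
  abel

end IsPinwheel

theorem isPinwheel_of_adj_iff (hH : IsUnrolledDissection n H) (hpq : p + 2 ≤ q) (hqr : q + 2 ≤ r)
    (hrp : r + 2 ≤ p + n)
    (hadj : ∀ ⦃i j⦄, p ≤ i → i < j → j < p + n → (H.Adj i j ↔ IsPinwheelChord n p q r i j)) :
    IsPinwheel n H p q r := by
  refine ⟨hpq, hqr, hrp, fun i j hi hij hj ↦ ?_, fun i j hi hij hj ↦ ?_, fun i j hi hij hj ↦ ?_⟩
  · rw [hadj (by lia) hij (by lia), IsPinwheelChord]
    lia
  · rw [hadj (by lia) hij (by lia), IsPinwheelChord]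
    lia
  rcases hj.eq_or_lt with rfl | hj
  · rw [hH.adj_add_right_iff, H.adj_comm, hadj le_rfl (by lia) hij, IsPinwheelChord]
    lia
  · rw [hadj (by lia) hij hj, IsPinwheelChord]
    lia

end Unrolled

/-! ### Unrolling the cycle -/

section Cyclic

variable {n : ℕ}

/-- The lift of a graph on the cycle `ZMod n` to its universal cover `ℤ`. -/
abbrev unroll (C : SimpleGraph (ZMod n)) : SimpleGraph ℤ := C.comap Int.cast

theorem unroll_injective : Function.Injective (unroll (n := n)) := by
  intro C C' h
  ext u v
  obtain ⟨i, rfl⟩ := ZMod.intCast_surjective u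
  obtain ⟨j, rfl⟩ := ZMod.intCast_surjective v
  exact iff_of_eq (congrArg (fun H : SimpleGraph ℤ ↦ H.Adj i j) h)

theorem isIsolated_unroll_iff {C : SimpleGraph (ZMod n)} {i : ℤ} :
    (unroll C).IsIsolated i ↔ C.IsIsolated (i : ZMod n) :=
  (ZMod.intCast_surjective.forall (p := fun v ↦ ¬ C.Adj i v)).symm

/-- The rotation of the standard cycle by `a` steps. -/
def cycleRotation (a : ZMod n) : standardCycle n ≃g standardCycle n where
  toEquiv := Equiv.addLeft a
  map_rel_iff' := by simp

/-- The reflection of the standard cycle fixing the vertex `0`. -/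
def cycleReflection (n : ℕ) : standardCycle n ≃g standardCycle n where
  toEquiv := Equiv.neg (ZMod n)
  map_rel_iff' := by
    intro u v
    simp [neg_add_eq_sub, or_comm]

theorem unroll_comap_cycleRotation (C : SimpleGraph (ZMod n)) (p : ℤ) :
    unroll (C.comap (cycleRotation (p : ZMod n))) = (unroll C).comap (p + ·) := by
  ext i j
  simp [cycleRotation]

theorem unroll_comap_cycleReflection (C : SimpleGraph (ZMod n)) :
    unroll (C.comap (cycleReflection n)) = reflect (unroll C) := by
  ext i j
  simp [cycleReflection]

variable [NeZero n]

theorem bijOn_intCast_Ico (m : ℤ) :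
    Set.BijOn (Int.cast : ℤ → ZMod n) (Set.Ico m (m + n)) Set.univ := by
  have hn : (0 : ℤ) < n := mod_cast NeZero.pos n
  refine ⟨Set.mapsTo_univ _ _, ?_, ?_⟩
  · rintro i ⟨hmi, him⟩ j ⟨hmj, hjm⟩ hij
    rw [ZMod.intCast_eq_intCast_iff_dvd_sub] at hij
    have := Int.eq_zero_of_abs_lt_dvd hij (by rw [abs_lt]; lia)
    lia
  · intro v _
    obtain ⟨i, rfl⟩ := ZMod.intCast_surjective v
    refine ⟨toIcoMod hn m i, toIcoMod_mem_Ico hn m i, ?_⟩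
    simp [toIcoMod]

theorem ncard_sep_Ico_intCast (m : ℤ) (P : ZMod n → Prop) :
    {i ∈ Set.Ico m (m + n) | P i}.ncard = {v | P v}.ncard := by
  have hbij := bijOn_intCast_Ico (n := n) m
  have hinj : Set.InjOn (Int.cast : ℤ → ZMod n) {i ∈ Set.Ico m (m + n) | P i} :=
    hbij.injOn.mono (Set.sep_subset _ _)
  rw [← hinj.ncard_image]
  congr 1
  ext v
  constructor
  · rintro ⟨i, ⟨-, hi⟩, rfl⟩
    exact hi
  · intro hv
    obtain ⟨i, hi, rfl⟩ := hbij.surjOn (Set.mem_univ v)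
    exact ⟨i, ⟨hi, hv⟩, rfl⟩

theorem map_Ico_intCast {α : Type*} (m : ℤ) (f : ZMod n → α) :
    (Multiset.Ico m (m + n)).map (fun i : ℤ ↦ f i) = univ.val.map f := by
  have hbij := bijOn_intCast_Ico (n := n) m
  rw [← coe_Ico] at hbij
  rw [Multiset.Ico, ← Function.comp_def f, ← Multiset.map_map, ← image_val_of_injOn hbij.injOn]
  congr
  exact coe_injective (by rw [coe_image, hbij.image_eq, coe_univ])

theorem val_intCast_sub (i j : ℤ) (hij : i < j + n) (hji : j < i + n) :
    (((i : ZMod n) - j).val : ℤ) = if j ≤ i then i - j else i - j + n := by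
  rw [← Int.cast_sub, ZMod.val_intCast]
  split_ifs with h
  · exact Int.emod_eq_of_lt (by lia) (by lia)
  · rw [← Int.add_emod_right, Int.emod_eq_of_lt (by lia) (by lia)]

theorem between_intCast_iff {m a b v : ℤ} (ha : a ∈ Set.Ico m (m + n))
    (hb : b ∈ Set.Ico m (m + n)) (hv : v ∈ Set.Ico m (m + n)) :
    Between n a b v ↔ if a < b then a < v ∧ v < b else b < a ∧ (v < b ∨ a < v) := by
  rw [Set.mem_Ico] at ha hb hv
  have hva := val_intCast_sub (n := n) v a (by lia) (by lia)
  have hba := val_intCast_sub (n := n) b a (by lia) (by lia)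
  rw [Between]
  split_ifs at * <;> lia

theorem cross_intCast_iff {m a b c d : ℤ} (hab : a < b) (ha : a ∈ Set.Ico m (m + n))
    (hb : b ∈ Set.Ico m (m + n)) (hc : c ∈ Set.Ico m (m + n)) (hd : d ∈ Set.Ico m (m + n)) :
    Cross n s((a : ZMod n), (b : ZMod n)) s((c : ZMod n), (d : ZMod n)) ↔
      Xor (a < c ∧ c < b) (a < d ∧ d < b) ∧ Xor (c < a ∨ b < c) (d < a ∨ b < d) := by
  have between_iff {v : ℤ} (hv : v ∈ Set.Ico m (m + n)) :
      Between n a b v ↔ a < v ∧ v < b := by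
    rw [between_intCast_iff ha hb hv, if_pos hab]
  have between_swap_iff {v : ℤ} (hv : v ∈ Set.Ico m (m + n)) :
      Between n b a v ↔ v < a ∨ b < v := by
    rw [between_intCast_iff hb ha hv, if_neg hab.not_gt, and_iff_right hab]
  rw [← between_iff hc, ← between_iff hd, ← between_swap_iff hc, ← between_swap_iff hd]
  constructor
  · intro h
    exact ⟨h _ _ _ _ rfl rfl, h _ _ _ _ Sym2.eq_swap rfl⟩
  · rintro ⟨h, h'⟩ s t u w he hf
    rw [Sym2.eq_iff] at he hf
    obtain ⟨rfl, rfl⟩ | ⟨rfl, rfl⟩ := he <;> obtain ⟨rfl, rfl⟩ | ⟨rfl, rfl⟩ := hf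
    exacts [h, h.symm, h', h'.symm]

theorem periodDegree_unroll (C : SimpleGraph (ZMod n)) (i : ℤ)
    [Fintype (C.neighborSet (i : ZMod n))] :
    periodDegree n (unroll C) i = C.degree (i : ZMod n) := by
  rw [periodDegree, ← C.card_neighborSet_eq_degree, ← Nat.card_eq_fintype_card]
  exact ncard_sep_Ico_intCast i fun v ↦ C.Adj i v

theorem degMultiset_eq_map_periodDegree (C : SimpleGraph (ZMod n)) (m : ℤ) :
    degMultiset C = (Multiset.Ico m (m + n)).map (periodDegree n (unroll C)) := by
  classical
  rw [degMultiset, ← map_Ico_intCast m]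
  exact Multiset.map_congr rfl fun i _ ↦ (periodDegree_unroll C i).symm

theorem NonCrossingChords.isUnrolledDissection {S : Set (Sym2 (ZMod n))}
    (hS : NonCrossingChords n S) : IsUnrolledDissection n (unroll (chordGraph n S)) where
  periodic i j := by simp
  not_adj_add_one i h := by
    rw [SimpleGraph.comap_adj, chordGraph, SimpleGraph.fromEdgeSet_adj] at h
    exact (hS.1 _ h.1).2 ⟨i, by push_cast; rfl⟩
  not_adj_of_interleaved a b c d hac hcb hbd hda hab hcd := by
    rw [SimpleGraph.comap_adj, chordGraph, SimpleGraph.fromEdgeSet_adj] at hab hcd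
    have hcross : Cross n s((a : ZMod n), (b : ZMod n)) s((c : ZMod n), (d : ZMod n)) := by
      rw [cross_intCast_iff (m := a) (by lia) ⟨by lia, by lia⟩ ⟨by lia, by lia⟩ ⟨by lia, by lia⟩
        ⟨by lia, by lia⟩]
      simp only [Xor]
      lia
    refine hS.2 _ hab.1 _ hcd.1 (fun heq ↦ ?_) hcross
    rw [Sym2.eq_iff] at heq
    have hinj := (bijOn_intCast_Ico (n := n) a).injOn
    obtain ⟨h, -⟩ | ⟨h, -⟩ := heq
    · exact hac.ne (hinj ⟨by lia, by lia⟩ ⟨by lia, by lia⟩ h)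
    · exact (hac.trans (hcb.trans hbd)).ne (hinj ⟨by lia, by lia⟩ ⟨by lia, by lia⟩ h)

theorem isHubTriangle_unroll {C : SimpleGraph (ZMod n)} {p q r : ℤ} (hpq : p < q) (hqr : q < r)
    (hrp : r < p + n) (hclique : C.IsClique {(p : ZMod n), (q : ZMod n), (r : ZMod n)})
    (hcover : C.IsVertexCover {(p : ZMod n), (q : ZMod n), (r : ZMod n)}) :
    IsHubTriangle n (unroll C) p q r := by
  have cast_eq_iff {i j : ℤ} (hi : i ∈ Set.Ico p (p + n)) (hj : j ∈ Set.Ico p (p + n)) :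
      (i : ZMod n) = j ↔ i = j :=
    (bijOn_intCast_Ico p).injOn.eq_iff hi hj
  have hp : p ∈ Set.Ico p (p + n) := ⟨by lia, by lia⟩
  have hq : q ∈ Set.Ico p (p + n) := ⟨by lia, by lia⟩
  have hr : r ∈ Set.Ico p (p + n) := ⟨by lia, by lia⟩
  have adj_of_lt {i j : ℤ} (hij : i < j) (hi : i = p ∨ i = q ∨ i = r)
      (hj : j = p ∨ j = q ∨ j = r) : (unroll C).Adj i j := by
    refine hclique ?_ ?_ ((cast_eq_iff ⟨by lia, by lia⟩ ⟨by lia, by lia⟩).not.2 hij.ne)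
    · obtain rfl | rfl | rfl := hi <;> simp
    · obtain rfl | rfl | rfl := hj <;> simp
  have hub_of_adj {i j : ℤ} (hpi : p ≤ i) (hij : i < j) (hjp : j < p + n)
      (hadj : (unroll C).Adj i j) : (i = p ∨ i = q ∨ i = r) ∨ (j = p ∨ j = q ∨ j = r) := by
    have hi : i ∈ Set.Ico p (p + n) := ⟨hpi, by lia⟩
    have hj : j ∈ Set.Ico p (p + n) := ⟨by lia, hjp⟩
    simpa only [Set.mem_insert_iff, Set.mem_singleton_iff, cast_eq_iff hi hp, cast_eq_iff hi hq,
      cast_eq_iff hi hr, cast_eq_iff hj hp, cast_eq_iff hj hq, cast_eq_iff hj hr] using hcover hadj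
  refine ⟨⟨hpq, by lia, adj_of_lt hpq (by simp) (by simp), fun i j hi hij hj hadj ↦ ?_⟩,
    ⟨hqr, by lia, adj_of_lt hqr (by simp) (by simp), fun i j hi hij hj hadj ↦ ?_⟩,
    ⟨hrp, by lia, ?_, fun i j hi hij hj hadj ↦ ?_⟩⟩
  · have := hub_of_adj (by lia) hij (by lia) hadj
    lia
  · have := hub_of_adj (by lia) hij (by lia) hadj
    lia
  · simpa using (adj_of_lt (hpq.trans hqr) (by simp) (by simp)).symm
  · have := hub_of_adj (by lia) hij (by lia) hadj
    lia

theorem exists_isHubTriangle_unroll {C : SimpleGraph (ZMod n)} {u v w : ZMod n} (huv : u ≠ v)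
    (huw : u ≠ w) (hvw : v ≠ w) (hclique : C.IsClique {u, v, w})
    (hcover : C.IsVertexCover {u, v, w}) :
    ∃ p q r : ℤ, IsHubTriangle n (unroll C) p q r ∧
      ∀ i ∈ [p, q, r], (i : ZMod n) ∈ ({u, v, w} : Set (ZMod n)) := by
  obtain ⟨p, rfl⟩ := ZMod.intCast_surjective u
  obtain ⟨q, ⟨hpq, hqp⟩, rfl⟩ := (bijOn_intCast_Ico p).surjOn (Set.mem_univ v)
  obtain ⟨r, ⟨hpr, hrp⟩, rfl⟩ := (bijOn_intCast_Ico p).surjOn (Set.mem_univ w)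
  replace hpq : p < q := hpq.lt_of_ne (by rintro rfl; exact huv rfl)
  replace hpr : p < r := hpr.lt_of_ne (by rintro rfl; exact huw rfl)
  have hqr : q ≠ r := by rintro rfl; exact hvw rfl
  rcases hqr.lt_or_gt with hqr | hrq
  · exact ⟨p, q, r, isHubTriangle_unroll hpq hqr hrp hclique hcover, by simp⟩
  · rw [Set.pair_comm] at hclique hcover
    exact ⟨p, r, q, isHubTriangle_unroll hpr hrq hqp hclique hcover, by simp⟩

theorem exists_isPinwheel_unroll_or_reflect {C : SimpleGraph (ZMod n)} {a b c : ℕ}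
    (hC : IsUnrolledDissection n (unroll C)) (ha : 3 ≤ a) (hb : 3 ≤ b) (hc : 3 ≤ c)
    (hdeg : degMultiset C =
      a ::ₘ b ::ₘ c ::ₘ (Multiset.replicate (a + b + c - 6) 1 + Multiset.replicate 3 0)) :
    ∃ p q r, IsPinwheel n (unroll C) p q r ∨ IsPinwheel n (reflect (unroll C)) p q r := by
  classical
  obtain ⟨u, v, w, huv, huw, hvw, hu, hv, hw, hclique, hcover⟩ :=
    exists_isClique_isVertexCover_of_degMultiset (by lia) hdeg
  obtain ⟨p, q, r, htri, hmem⟩ := exists_isHubTriangle_unroll huv huw hvw hclique hcover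
  have three_le_degree (i : ℤ) (hi : i ∈ [p, q, r]) : 3 ≤ periodDegree n (unroll C) i := by
    rw [periodDegree_unroll]
    obtain h | h | h := hmem i hi <;> rw [h] <;> lia
  have card_isolated : {i ∈ Set.Ico p (p + n) | (unroll C).IsIsolated i}.ncard ≤ 3 := by
    simp only [isIsolated_unroll_iff]
    rw [ncard_sep_Ico_intCast p fun v ↦ C.IsIsolated v, ncard_isIsolated, hdeg]
    rw [Multiset.count_cons_of_ne (by lia), Multiset.count_cons_of_ne (by lia),
      Multiset.count_cons_of_ne (by lia), Multiset.count_add, Multiset.count_replicate_self,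
      Multiset.count_replicate, if_neg one_ne_zero]
  rcases htri.isPinwheel_or_isPinwheel_reflect hC card_isolated (three_le_degree p (by simp))
    (three_le_degree q (by simp)) (three_le_degree r (by simp)) with h | h
  · exact ⟨p, q, r, .inl h⟩
  · exact ⟨-p, n - r, n - q, .inr h⟩

theorem degMultiset_of_isPinwheel {C : SimpleGraph (ZMod n)} {p q r : ℤ}
    (hC : IsUnrolledDissection n (unroll C)) (h : IsPinwheel n (unroll C) p q r) :
    degMultiset C = (q - p).toNat ::ₘ (r - q).toNat ::ₘ (p + n - r).toNat ::ₘ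
      (Multiset.replicate (n - 6) 1 + Multiset.replicate 3 0) := by
  rw [degMultiset_eq_map_periodDegree C p, h.map_periodDegree_Ico hC]
  congr
  lia

theorem exists_cycleAut_isPinwheel_of_eq {C : SimpleGraph (ZMod n)} {p q r : ℤ} {x y : ℕ}
    (hC : IsUnrolledDissection n (unroll C)) (h : IsPinwheel n (unroll C) p q r)
    (hdeg : degMultiset C =
      y ::ₘ x ::ₘ x ::ₘ (Multiset.replicate (n - 6) 1 + Multiset.replicate 3 0)) :
    ∃ e : standardCycle n ≃g standardCycle n, IsUnrolledDissection n (unroll (C.comap e)) ∧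
      IsPinwheel n (unroll (C.comap e)) 0 y (y + x) := by
  have exists_of_lengths {p q r : ℤ} (h : IsPinwheel n (unroll C) p q r) (hy : q - p = y)
      (hx : r - q = x) : ∃ e : standardCycle n ≃g standardCycle n,
        IsUnrolledDissection n (unroll (C.comap e)) ∧
          IsPinwheel n (unroll (C.comap e)) 0 y (y + x) := by
    refine ⟨cycleRotation p, ?_⟩
    rw [unroll_comap_cycleRotation, ← hy, ← hx, sub_add_sub_cancel']
    exact ⟨hC.translate p, h.translate⟩
  have lengths_eq : ({(q - p).toNat, (r - q).toNat, (p + n - r).toNat} : Multiset ℕ) =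
      {y, x, x} := by
    refine add_right_cancel (b := Multiset.replicate (n - 6) 1 + Multiset.replicate 3 0) ?_
    simpa only [Multiset.insert_eq_cons, Multiset.cons_add, Multiset.singleton_add] using
      (degMultiset_of_isPinwheel hC h).symm.trans hdeg
  have sum_eq := congrArg Multiset.sum lengths_eq
  have mem_iff (z : ℕ) := iff_of_eq (congrArg (z ∈ ·) lengths_eq)
  simp only [Multiset.insert_eq_cons, Multiset.sum_cons, Multiset.sum_singleton] at sum_eq
  simp only [Multiset.insert_eq_cons, Multiset.mem_cons, Multiset.mem_singleton] at mem_iff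
  have hqp := mem_iff (q - p).toNat
  have hrq := mem_iff (r - q).toNat
  have hpr := mem_iff (p + n - r).toNat
  obtain ⟨hpq, hqr, hrp, -⟩ := id h
  rcases (mem_iff y).2 (.inl rfl) with hy | hy | hy
  · exact exists_of_lengths h (by lia) (by lia)
  · exact exists_of_lengths (h.rotate hC) (by lia) (by lia)
  · exact exists_of_lengths ((h.rotate hC).rotate hC) (by lia) (by lia)

theorem exists_cycleAut_isPinwheel {C : SimpleGraph (ZMod n)} {x y : ℕ}
    (hC : IsUnrolledDissection n (unroll C)) (hx : 3 ≤ x) (hy : 3 ≤ y) (hn : y + x + x = n)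
    (hdeg : degMultiset C =
      y ::ₘ x ::ₘ x ::ₘ (Multiset.replicate (n - 6) 1 + Multiset.replicate 3 0)) :
    ∃ e : standardCycle n ≃g standardCycle n, IsUnrolledDissection n (unroll (C.comap e)) ∧
      IsPinwheel n (unroll (C.comap e)) 0 y (y + x) := by
  obtain ⟨p, q, r, h | h⟩ := exists_isPinwheel_unroll_or_reflect hC hy hx hx (by rw [hdeg, hn])
  · exact exists_cycleAut_isPinwheel_of_eq hC h hdeg
  · rw [← unroll_comap_cycleReflection] at h
    have hreflect : IsUnrolledDissection n (unroll (C.comap (cycleReflection n))) := by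
      rw [unroll_comap_cycleReflection]
      exact hC.reflect
    have hdeg_reflect := (degMultiset_eq_of_iso (.comap (cycleReflection n).toEquiv C)).trans hdeg
    obtain ⟨e, he⟩ := exists_cycleAut_isPinwheel_of_eq hreflect h hdeg_reflect
    exact ⟨e.trans (cycleReflection n), he⟩

theorem nonempty_iso_standardCycle_sup {C C' : SimpleGraph (ZMod n)} {x y : ℕ}
    (hC : IsUnrolledDissection n (unroll C)) (hC' : IsUnrolledDissection n (unroll C'))
    (hx : 3 ≤ x) (hy : 3 ≤ y) (hn : y + x + x = n)
    (hdeg : degMultiset C =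
      y ::ₘ x ::ₘ x ::ₘ (Multiset.replicate (n - 6) 1 + Multiset.replicate 3 0))
    (hdeg' : degMultiset C' =
      y ::ₘ x ::ₘ x ::ₘ (Multiset.replicate (n - 6) 1 + Multiset.replicate 3 0)) :
    Nonempty (standardCycle n ⊔ C ≃g standardCycle n ⊔ C') := by
  obtain ⟨e, hdis, hpin⟩ := exists_cycleAut_isPinwheel hC hx hy hn hdeg
  obtain ⟨e', hdis', hpin'⟩ := exists_cycleAut_isPinwheel hC' hx hy hn hdeg'
  have comap_eq : C.comap e = C'.comap e' :=
    unroll_injective (hpin.eq_of_isPinwheel hdis hpin' hdis')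
  have adj_iff (u v : ZMod n) : C'.Adj (e' (e.symm u)) (e' (e.symm v)) ↔ C.Adj u v := by
    rw [← SimpleGraph.comap_adj (f := e'), ← comap_eq, SimpleGraph.comap_adj, e.apply_symm_apply,
      e.apply_symm_apply]
  exact ⟨(e.symm.trans e').toEquiv, fun {u v} ↦
    or_congr (e.symm.trans e').map_rel_iff (adj_iff u v)⟩

theorem isChord_intCast {i j : ℤ} (hij : i + 2 ≤ j) (hji : j + 2 ≤ i + n) :
    IsChord n s((i : ZMod n), (j : ZMod n)) := by
  have injOn := (bijOn_intCast_Ico (n := n) i).injOn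
  constructor
  · intro hdiag
    have := injOn ⟨by lia, by lia⟩ ⟨by lia, by lia⟩ (Sym2.mk_isDiag_iff.1 hdiag)
    lia
  · rintro ⟨k, hk⟩
    rw [Sym2.eq_iff] at hk
    obtain ⟨rfl, hj⟩ | ⟨hi, rfl⟩ := hk
    · have := @injOn j ⟨by lia, by lia⟩ (i + 1) ⟨by lia, by lia⟩ (by simpa using hj)
      lia
    · have := @injOn i ⟨by lia, by lia⟩ (j + 1) ⟨by lia, by lia⟩ (by simpa using hi)
      lia

theorem sym2_intCast_eq_iff {m i j k l : ℤ} (hmi : m ≤ i) (hij : i < j) (hjm : j < m + n)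
    (hmk : m ≤ k) (hkl : k < l) (hlm : l < m + n) :
    s((i : ZMod n), (j : ZMod n)) = s((k : ZMod n), (l : ZMod n)) ↔ i = k ∧ j = l := by
  have cast_eq_iff {a b : ℤ} (ha : a ∈ Set.Ico m (m + n)) (hb : b ∈ Set.Ico m (m + n)) :
      (a : ZMod n) = b ↔ a = b := (bijOn_intCast_Ico m).injOn.eq_iff ha hb
  rw [Sym2.eq_iff, cast_eq_iff ⟨by lia, by lia⟩ ⟨by lia, by lia⟩,
    cast_eq_iff ⟨by lia, by lia⟩ ⟨by lia, by lia⟩, cast_eq_iff ⟨by lia, by lia⟩ ⟨by lia, by lia⟩,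
    cast_eq_iff ⟨by lia, by lia⟩ ⟨by lia, by lia⟩]
  lia

/-- The chords of the pinwheel on `ZMod n` with hubs `0`, `b` and `c`, given as the images of
integer pairs in `[0, n)`. -/
def pinwheelChords (n : ℕ) (b c : ℤ) : Set (Sym2 (ZMod n)) :=
  {e | ∃ i j : ℤ, IsPinwheelChord n 0 b c i j ∧ e = s((i : ZMod n), (j : ZMod n))}

theorem nonCrossingChords_pinwheelChords {b c : ℤ} (hb : 2 ≤ b) (hbc : b + 2 ≤ c)
    (hcn : c + 2 ≤ n) : NonCrossingChords n (pinwheelChords n b c) := by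
  constructor
  · rintro _ ⟨i, j, hij, rfl⟩
    unfold IsPinwheelChord at hij
    exact isChord_intCast (by lia) (by lia)
  · rintro _ ⟨i, j, hij, rfl⟩ _ ⟨k, l, hkl, rfl⟩ -
    unfold IsPinwheelChord at hij hkl
    rw [cross_intCast_iff (m := 0) (by lia) ⟨by lia, by lia⟩ ⟨by lia, by lia⟩ ⟨by lia, by lia⟩
      ⟨by lia, by lia⟩]
    simp only [Xor]
    lia

theorem isPinwheel_unroll_pinwheelChords {b c : ℤ} (hb : 2 ≤ b) (hbc : b + 2 ≤ c)
    (hcn : c + 2 ≤ n) : IsPinwheel n (unroll (chordGraph n (pinwheelChords n b c))) 0 b c := by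
  refine isPinwheel_of_adj_iff (nonCrossingChords_pinwheelChords hb hbc hcn).isUnrolledDissection
    (by lia) hbc (by lia) fun i j hi hij hj ↦ ?_
  rw [SimpleGraph.comap_adj, chordGraph, SimpleGraph.fromEdgeSet_adj]
  constructor
  · rintro ⟨⟨k, l, hkl, heq⟩, -⟩
    have hkl' := hkl
    unfold IsPinwheelChord at hkl'
    rw [sym2_intCast_eq_iff hi hij hj (by lia) (by lia) (by lia)] at heq
    rwa [heq.1, heq.2]
  · exact fun h ↦ ⟨⟨i, j, h, rfl⟩,
      ((bijOn_intCast_Ico 0).injOn.ne_iff ⟨hi, by lia⟩ ⟨by lia, hj⟩).2 hij.ne⟩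

theorem degMultiset_pinwheelChords {x y : ℕ} (hx : 2 ≤ x) (hy : 2 ≤ y) (hn : y + x + x = n) :
    degMultiset (chordGraph n (pinwheelChords n y (y + x))) =
      y ::ₘ x ::ₘ x ::ₘ (Multiset.replicate (n - 6) 1 + Multiset.replicate 3 0) := by
  have hS := nonCrossingChords_pinwheelChords (n := n) (b := y) (c := y + x) (by lia) (by lia)
    (by lia)
  rw [degMultiset_of_isPinwheel hS.isUnrolledDissection
    (isPinwheel_unroll_pinwheelChords (by lia) (by lia) (by lia))]
  congr <;> lia

end Cyclic

/-- Type B1 of the paper's Theorem 2: for `n ≥ 9` and `3 ≤ x ≤ ⌊(n-3)/2⌋`, the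
multiset `{(x+2)^2, n+2-2x, 3^(n-6), 2^3}` is outerplane-unigraphic. -/
theorem unigraphic_B1 (n x : ℕ) (hn : 9 ≤ n) (hx1 : 3 ≤ x) (hx2 : x ≤ (n - 3) / 2) :
    OuterplaneUnigraphic n
      (Multiset.replicate 2 (x + 2) +
        ((n + 2 - 2 * x) ::ₘ
          (Multiset.replicate (n - 6) 3 + Multiset.replicate 3 2))) := by
  have : NeZero n := ⟨by lia⟩
  obtain ⟨y, hsum⟩ : ∃ y, y + x + x = n := ⟨n - x - x, by lia⟩
  have degrees_eq : Multiset.replicate 2 (x + 2) + ((n + 2 - 2 * x) ::ₘ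
      (Multiset.replicate (n - 6) 3 + Multiset.replicate 3 2)) =
      (y ::ₘ x ::ₘ x ::ₘ (Multiset.replicate (n - 6) 1 + Multiset.replicate 3 0)).map (· + 2) := by
    rw [show n + 2 - 2 * x = y + 2 by lia, Multiset.add_cons]
    simp only [Multiset.map_cons, Multiset.map_add, Multiset.map_replicate]
    rfl
  rw [degrees_eq]
  refine ⟨?_, fun G G' hG hG' hdeg hdeg' ↦ ?_⟩
  · have hS := nonCrossingChords_pinwheelChords (n := n) (b := y) (c := y + x) (by lia) (by lia)
      (by lia)
    refine ⟨_, hS.isOuterplane_sup (by lia), ?_⟩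
    rw [hS.degreeMultiset_standardCycle_sup (by lia),
      degMultiset_pinwheelChords (by lia) (by lia) hsum]
  · obtain ⟨S, hS, rfl⟩ := hG.exists_eq_sup
    obtain ⟨S', hS', rfl⟩ := hG'.exists_eq_sup
    have map_inj := Multiset.map_injective (add_left_injective 2)
    rw [hS.degreeMultiset_standardCycle_sup (by lia)] at hdeg
    rw [hS'.degreeMultiset_standardCycle_sup (by lia)] at hdeg'
    exact nonempty_iso_standardCycle_sup hS.isUnrolledDissection hS'.isUnrolledDissection hx1
      (by lia) hsum (map_inj hdeg) (map_inj hdeg')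
end

section
/- Let p ≥ 12 be an integer divisible by 4 and set n = p−1. Then the multiset {(p/4 + 2)^4, 3^(p−8), 2^3} is outerplane-unigraphic: there exists an outerplane graph on n vertices with this degree multiset, and any two outerplane graphs on n vertices with this degree multiset are isomorphic. (Type D1 of the paper's Theorem 2, corresponding to the polytope degree sequence p−1, (p/4+3)^4, 4^(p−8), 3^3.) -/
/-!
Call the four vertices of degree `p / 4 + 2` hubs and let `m = p / 4`. In the chord graph the hubs
have degree `m`, three vertices are isolated and every other vertex is a leaf, so counting the
edges leaving the set of hubs shows that the hubs span at least four chords. Every chord cuts off an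
isolated vertex on either side; as there are only three of these, one of the four sides of the
quadrilateral of hubs is not a chord, hence the hubs span the other three sides and exactly one
diagonal. All remaining chords then join leaves to hubs, so between consecutive hubs joined by a
chord the leaves form a fan at one of the two. The degree bounds at the hubs are then tight, which
forces the positions of the hubs and the apexes of the fans, up to a symmetry of the polygon.
-/

open Finset SimpleGraph

open scoped Classical in
theorem degMultiset_eq_map_degree {V : Type*} [Fintype V] (G : SimpleGraph V) :
    degMultiset G = univ.val.map fun v ↦ G.degree v := by
  rw [degMultiset]

open scoped Classical in
theorem count_degMultiset {V : Type*} [Fintype V] (G : SimpleGraph V) (k : ℕ) :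
    (degMultiset G).count k = #{v | G.degree v = k} := by
  rw [degMultiset_eq_map_degree, Multiset.count_map, card_def, filter_val]
  simp only [eq_comm]

open scoped Classical in
theorem sum_degMultiset {V : Type*} [Fintype V] (G : SimpleGraph V) :
    (degMultiset G).sum = ∑ v, G.degree v := by
  rw [degMultiset_eq_map_degree, Finset.sum]

theorem degMultiset_congr {V W : Type*} [Fintype V] [Fintype W] {G : SimpleGraph V}
    {H : SimpleGraph W} (e : G ≃g H) : degMultiset G = degMultiset H := by
  classical
  rw [degMultiset_eq_map_degree, degMultiset_eq_map_degree, ← map_univ_equiv e.toEquiv, map_val,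
    Multiset.map_map]
  exact Multiset.map_congr rfl fun v _ ↦ (e.degree_eq v).symm

theorem eq_of_le_of_degMultiset_eq {V : Type*} [Fintype V] {G H : SimpleGraph V} (hle : G ≤ H)
    (hdeg : degMultiset G = degMultiset H) : G = H := by
  classical
  have hsum : ∑ v, G.degree v = ∑ v, H.degree v := by
    rw [← sum_degMultiset, ← sum_degMultiset, hdeg]
  rw [sum_degrees_eq_twice_card_edges, sum_degrees_eq_twice_card_edges] at hsum
  exact edgeFinset_inj.1 (eq_of_subset_of_card_le (edgeFinset_mono hle) (by omega))

theorem map_univ_val_eq_replicate {V : Type*} [Fintype V] {A B : Finset V}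
    (hAB : Disjoint A B) {f : V → ℕ} {a b c : ℕ} (hA : ∀ v ∈ A, f v = a) (hB : ∀ v ∈ B, f v = b)
    (hc : ∀ v, v ∉ A → v ∉ B → f v = c) :
    univ.val.map f = Multiset.replicate #A a + Multiset.replicate (Fintype.card V - #A - #B) c +
      Multiset.replicate #B b := by
  classical
  have hcard : #(A ∪ B)ᶜ = Fintype.card V - #A - #B := by
    rw [card_compl, card_union_of_disjoint hAB, Nat.sub_sub]
  have hval : (univ : Finset V).val = A.val + (A ∪ B)ᶜ.val + B.val := by
    have hA' : Disjoint A (A ∪ B)ᶜ := disjoint_compl_right.mono_left subset_union_left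
    have hB' : Disjoint (A.disjUnion _ hA') B := by
      rw [disjoint_disjUnion_left]
      exact ⟨hAB, disjoint_compl_left.mono_right subset_union_right⟩
    have huniv : univ = (A.disjUnion _ hA').disjUnion B hB' := by
      ext v
      simp only [mem_univ, mem_disjUnion, mem_compl, mem_union]
      tauto
    rw [huniv, disjUnion_val, disjUnion_val]
  have hrep : ∀ (s : Finset V) (k : ℕ), (∀ v ∈ s, f v = k) →
      s.val.map f = Multiset.replicate #s k := fun s k h ↦ by
    rw [Multiset.map_congr rfl (g := fun _ ↦ k) h, Multiset.map_const', card_def]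
  rw [hval, Multiset.map_add, Multiset.map_add, hrep A a hA, hrep B b hB, ← hcard,
    hrep _ c fun v hv ↦ ?_]
  simp only [mem_compl, mem_union, not_or] at hv
  exact hc v hv.1 hv.2

theorem exists_lt_lt_lt_of_card_eq_four {α : Type*} [LinearOrder α] {s : Finset α} (hs : #s = 4) :
    ∃ a b c d, a < b ∧ b < c ∧ c < d ∧ s = {a, b, c, d} := by
  refine ⟨s.orderEmbOfFin hs 0, s.orderEmbOfFin hs 1, s.orderEmbOfFin hs 2, s.orderEmbOfFin hs 3,
    by simp, by simp, by simp, ?_⟩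
  calc s = univ.image (s.orderEmbOfFin hs) := (image_orderEmbOfFin_univ s hs).symm
    _ = _ := by simp [Fin.univ_succ]

theorem degree_sup_of_disjoint {V : Type*} {G₁ G₂ : SimpleGraph V} (v : V)
    [Fintype ((G₁ ⊔ G₂).neighborSet v)] [Fintype (G₁.neighborSet v)] [Fintype (G₂.neighborSet v)]
    (h : Disjoint G₁ G₂) : (G₁ ⊔ G₂).degree v = G₁.degree v + G₂.degree v := by
  rw [← card_neighborFinset_eq_degree, neighborFinset_sup_of_disjoint v h, card_disjUnion,
    card_neighborFinset_eq_degree, card_neighborFinset_eq_degree]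

section HubCount

variable {V : Type*} [Fintype V] {G : SimpleGraph V} {m : ℕ}

/-- The degrees of the chords of a type D1 graph: every vertex also has two cycle neighbours. -/
def d1ChordDegrees (m : ℕ) : Multiset ℕ :=
  Multiset.replicate 4 m + Multiset.replicate (4 * m - 8) 1 + Multiset.replicate 3 0

open scoped Classical in
/-- The vertices of degree `m`. For a graph with degrees `d1ChordDegrees m` there are four of
them, and every other vertex has degree at most one. -/
noncomputable def hubs (G : SimpleGraph V) (m : ℕ) : Finset V := {v | G.degree v = m}

open scoped Classical in
theorem mem_hubs {v : V} : v ∈ hubs G m ↔ G.degree v = m := by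
  simp [hubs]

theorem mem_hubs_comap {V W : Type*} [Fintype V] [Fintype W] {e : V ≃ W} {G : SimpleGraph W}
    {k : ℕ} {v : V} : v ∈ hubs (G.comap e) k ↔ e v ∈ hubs G k := by
  classical
  rw [mem_hubs, mem_hubs, ← Iso.comap_apply e G v, Iso.degree_eq]
  congr!

theorem card_hubs (hm : 2 ≤ m) (hG : degMultiset G = d1ChordDegrees m) : #(hubs G m) = 4 := by
  rw [hubs, ← count_degMultiset, hG]
  simp only [d1ChordDegrees, Multiset.count_add, Multiset.count_replicate]
  grind

open scoped Classical in
theorem card_isIsolated (hm : 2 ≤ m) (hG : degMultiset G = d1ChordDegrees m) :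
    #{v | G.IsIsolated v} = 3 := by
  simp only [← degree_eq_zero]
  rw [← count_degMultiset, hG]
  simp only [d1ChordDegrees, Multiset.count_add, Multiset.count_replicate]
  grind

variable [DecidableEq V]

open scoped Classical in
theorem sum_degree_eq_sum_card_inter (G : SimpleGraph V) (B : Finset V) :
    ∑ b ∈ B, G.degree b =
      ∑ b ∈ B, #(G.neighborFinset b ∩ B) + ∑ v ∈ Bᶜ, #(G.neighborFinset v ∩ B) := by
  have hswap := sum_card_bipartiteAbove_eq_sum_card_bipartiteBelow (s := B) (t := univ) G.Adj
  have hinter (v : V) : #(G.neighborFinset v ∩ B) = #(bipartiteBelow G.Adj B v) := by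
    congr 1
    ext b
    simp only [mem_inter, mem_neighborFinset, mem_bipartiteBelow, and_comm, G.adj_comm v b]
  simp only [hinter, sum_add_sum_compl, ← hswap]
  exact sum_congr rfl fun v _ ↦ by
    rw [← card_neighborFinset_eq_degree, neighborFinset_eq_filter, bipartiteAbove]

open scoped Classical in
theorem sum_degree_compl_hubs (hm : 2 ≤ m) (hG : degMultiset G = d1ChordDegrees m) :
    ∑ v ∈ (hubs G m)ᶜ, G.degree v = 4 * m - 8 := by
  have htotal : ∑ v, G.degree v = 4 * m + (4 * m - 8) := by
    rw [← sum_degMultiset, hG]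
    simp only [d1ChordDegrees, Multiset.sum_add, Multiset.sum_replicate, smul_eq_mul]
    omega
  have hhubs : ∑ v ∈ hubs G m, G.degree v = 4 * m := by
    rw [sum_const_nat fun v hv ↦ mem_hubs.1 hv, card_hubs hm hG]
  have hsplit := sum_add_sum_compl (hubs G m) fun v ↦ G.degree v
  omega

open scoped Classical in
theorem eight_le_sum_card_neighborFinset_inter_hubs (hm : 2 ≤ m)
    (hG : degMultiset G = d1ChordDegrees m) :
    8 ≤ ∑ b ∈ hubs G m, #(G.neighborFinset b ∩ hubs G m) := by
  have hcount := sum_degree_eq_sum_card_inter G (hubs G m)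
  rw [sum_const_nat fun v hv ↦ mem_hubs.1 hv, card_hubs hm hG] at hcount
  have hle : ∑ v ∈ (hubs G m)ᶜ, #(G.neighborFinset v ∩ hubs G m) ≤ 4 * m - 8 := by
    rw [← sum_degree_compl_hubs hm hG]
    exact sum_le_sum fun v _ ↦ card_le_card inter_subset_left
  omega

open scoped Classical in
theorem mem_hubs_of_adj (hm : 2 ≤ m) (hG : degMultiset G = d1ChordDegrees m)
    (height : ∑ b ∈ hubs G m, #(G.neighborFinset b ∩ hubs G m) = 8) {u v : V}
    (hv : v ∉ hubs G m) (huv : G.Adj v u) : u ∈ hubs G m := by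
  have hcount := sum_degree_eq_sum_card_inter G (hubs G m)
  rw [sum_const_nat fun v hv ↦ mem_hubs.1 hv, card_hubs hm hG, height] at hcount
  have hle : ∀ w ∈ (hubs G m)ᶜ, #(G.neighborFinset w ∩ hubs G m) ≤ G.degree w :=
    fun w _ ↦ card_le_card inter_subset_left
  have htight := (sum_eq_sum_iff_of_le hle).1
    (by rw [sum_degree_compl_hubs hm hG]; omega) v (mem_compl.2 hv)
  have hsub := eq_of_subset_of_card_le inter_subset_left htight.ge
  exact inter_eq_left.1 hsub ((mem_neighborFinset ..).2 huv)

open scoped Classical in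
theorem sum_card_neighborFinset_inter_quadruple {w x y z : V} (hwx : w ≠ x) (hwy : w ≠ y)
    (hwz : w ≠ z) (hxy : x ≠ y) (hxz : x ≠ z) (hyz : y ≠ z) :
    ∑ b ∈ {w, x, y, z}, #(G.neighborFinset b ∩ {w, x, y, z}) =
      2 * ((if G.Adj w x then 1 else 0) + (if G.Adj x y then 1 else 0) +
        (if G.Adj y z then 1 else 0) + (if G.Adj w z then 1 else 0) +
        (if G.Adj w y then 1 else 0) + (if G.Adj x z then 1 else 0)) := by
  have hsum (f : V → ℕ) : ∑ b ∈ {w, x, y, z}, f b = f w + f x + f y + f z := by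
    rw [sum_insert (by simp [*]), sum_insert (by simp [*]), sum_pair hyz]
    ring
  have hcard (b : V) : #(G.neighborFinset b ∩ {w, x, y, z}) =
      ∑ c ∈ {w, x, y, z}, if G.Adj b c then 1 else 0 := by
    rw [← card_filter, inter_comm, ← filter_mem_eq_inter]
    simp only [mem_neighborFinset]
  simp only [hcard, hsum, SimpleGraph.irrefl, if_false, G.adj_comm x w, G.adj_comm y w,
    G.adj_comm z w, G.adj_comm y x, G.adj_comm z x, G.adj_comm z y]
  ring

open scoped Classical in
theorem four_le_hub_adjacencies (hm : 2 ≤ m) (hG : degMultiset G = d1ChordDegrees m) {w x y z : V}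
    (hB : hubs G m = {w, x, y, z}) (hwx : w ≠ x) (hwy : w ≠ y) (hwz : w ≠ z) (hxy : x ≠ y)
    (hxz : x ≠ z) (hyz : y ≠ z) :
    4 ≤ (if G.Adj w x then 1 else 0) + (if G.Adj x y then 1 else 0) +
      (if G.Adj y z then 1 else 0) + (if G.Adj w z then 1 else 0) +
      (if G.Adj w y then 1 else 0) + (if G.Adj x z then 1 else 0) := by
  have height := eight_le_sum_card_neighborFinset_inter_hubs hm hG
  rw [hB, sum_card_neighborFinset_inter_quadruple hwx hwy hwz hxy hxz hyz] at height
  omega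

end HubCount

theorem val_fin_sub_eq_ite {n : ℕ} (a b : Fin n) :
    ((a - b : Fin n) : ℕ) = if (b : ℕ) ≤ a then (a : ℕ) - b else n + a - b := by
  split_ifs with h
  · exact Fin.sub_val_of_le h
  · exact Fin.coe_sub_iff_lt.2 (not_le.1 h)

section Dissection

variable {n : ℕ} [NeZero n] {H : SimpleGraph (Fin n)}

/-- The edges of `H` are pairwise non-crossing diagonals of the convex polygon whose corners are
`0, 1, …, n - 1` in this order. Addition in `Fin n` is cyclic, so that `0` follows `n - 1`. -/
structure IsDissection (H : SimpleGraph (Fin n)) : Prop where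
  add_one_ne ⦃a b : Fin n⦄ : H.Adj a b → a + 1 ≠ b
  le_of_adj ⦃a b c d : Fin n⦄ : H.Adj a b → H.Adj c d → a < c → c < b → d ≤ b

namespace IsDissection

theorem le_and_le (hH : IsDissection H) {a b c d : Fin n} (hab : H.Adj a b) (hcd : H.Adj c d)
    (hac : a < c) (hcb : c < b) : a ≤ d ∧ d ≤ b := by
  refine ⟨?_, hH.le_of_adj hab hcd hac hcb⟩
  by_contra! hda
  exact (hH.le_of_adj hcd.symm hab hda hac).not_gt hcb

theorem not_adj_of_val_eq_add_one (hH : IsDissection H) {a b : Fin n} (h : (b : ℕ) = a + 1) :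
    ¬ H.Adj a b := fun hab ↦
  hH.add_one_ne hab (Fin.ext (by rw [Fin.val_add_one_of_lt' (h ▸ b.isLt), h]))

theorem add_two_le (hH : IsDissection H) {a b : Fin n} (hab : H.Adj a b) (hlt : a < b) :
    (a : ℕ) + 2 ≤ b := by
  by_contra! h
  exact hH.not_adj_of_val_eq_add_one (by omega) hab

theorem add_one_lt_of_adj_zero (hH : IsDissection H) {v : Fin n} (hv : H.Adj 0 v) :
    (v : ℕ) + 1 < n := by
  by_contra! h
  refine hH.add_one_ne hv.symm (Fin.ext ?_)
  rw [Fin.val_add, Fin.val_one', Nat.add_mod_mod, show (v : ℕ) + 1 = n by omega, Nat.mod_self,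
    Fin.val_zero]

theorem exists_isIsolated_between (hH : IsDissection H) {a b : Fin n} (hab : H.Adj a b)
    (hlt : a < b) : ∃ v, a < v ∧ v < b ∧ H.IsIsolated v := by
  have hgap := hH.add_two_le hab hlt
  obtain ⟨v, hv⟩ : ∃ v : Fin n, (v : ℕ) = a + 1 := ⟨⟨a + 1, by omega⟩, rfl⟩
  have hav : a < v := by omega
  have hvb : v < b := by omega
  by_cases hiso : H.IsIsolated v
  · exact ⟨v, hav, hvb, hiso⟩
  obtain ⟨d, hvd⟩ := exists_adj_iff_not_isIsolated.2 hiso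
  obtain ⟨had, hdb⟩ := hH.le_and_le hab hvd hav hvb
  have hvd_lt : v < d := by
    rcases had.eq_or_lt with rfl | had
    · exact (hH.not_adj_of_val_eq_add_one hv hvd.symm).elim
    · exact lt_of_le_of_ne (by omega) hvd.ne
  obtain ⟨u, hvu, hud, hu⟩ := hH.exists_isIsolated_between hvd hvd_lt
  exact ⟨u, hav.trans hvu, hud.trans_le hdb, hu⟩
termination_by (b : ℕ) - a

theorem exists_isIsolated_gt (hH : IsDissection H) {v : Fin n} (hv : H.Adj 0 v) :
    ∃ u, v < u ∧ H.IsIsolated u := by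
  obtain ⟨u, hu⟩ : ∃ u : Fin n, (u : ℕ) = v + 1 := ⟨⟨v + 1, hH.add_one_lt_of_adj_zero hv⟩, rfl⟩
  have hvu : v < u := by omega
  by_cases hiso : H.IsIsolated u
  · exact ⟨u, hvu, hiso⟩
  obtain ⟨d, hud⟩ := exists_adj_iff_not_isIsolated.2 hiso
  rcases hud.ne.lt_or_gt with hlt | hgt
  · obtain ⟨t, hut, -, ht⟩ := hH.exists_isIsolated_between hud hlt
    exact ⟨t, hvu.trans hut, ht⟩
  have hdv : d < v := by
    have := hH.add_two_le hud.symm hgt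
    omega
  obtain rfl : d = 0 := by
    by_contra hne
    exact (hH.le_and_le hv hud.symm (Fin.pos_iff_ne_zero.2 hne) hdv).2.not_gt hvu
  obtain ⟨t, hut, ht⟩ := hH.exists_isIsolated_gt hud.symm
  exact ⟨t, hvu.trans hut, ht⟩
termination_by n - (v : ℕ)

theorem adj_or_adj_of_between (hH : IsDissection H) {p q u : Fin n} (hpq : H.Adj p q)
    (hin : ∀ ⦃u v⦄, p < u → u < q → p < v → v < q → ¬ H.Adj u v) (hpu : p < u) (huq : u < q)
    (hu : ¬ H.IsIsolated u) : H.Adj p u ∨ H.Adj q u := by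
  obtain ⟨d, hud⟩ := exists_adj_iff_not_isIsolated.2 hu
  obtain ⟨hpd, hdq⟩ := hH.le_and_le hpq hud hpu huq
  rcases hpd.eq_or_lt with rfl | hpd
  · exact .inl hud.symm
  rcases hdq.eq_or_lt with rfl | hdq
  · exact .inr hud.symm
  exact (hin hpu huq hpd hdq hud).elim

theorem le_of_adj_of_adj (hH : IsDissection H) {p q u v : Fin n} (hpu : p < u) (hvq : v < q)
    (hqu : H.Adj q u) (hpv : H.Adj p v) : v ≤ u := by
  by_contra! huv
  exact (hH.le_and_le hpv hqu.symm hpu huv).2.not_gt hvq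

-- The chord from `q` to the vertex next to `p` cuts `p` off from the rest of the arc.
theorem fan_right_of_adj (hH : IsDissection H) {p q i s : Fin n} (hpq : H.Adj p q)
    (hin : ∀ ⦃u v⦄, p < u → u < q → p < v → v < q → ¬ H.Adj u v)
    (hi : ∀ ⦃v⦄, p < v → v < q → H.IsIsolated v → v = i) (hs : (s : ℕ) = p + 1)
    (hqs : H.Adj q s) : ∀ v : Fin n, p < v → (v : ℕ) + 1 < q → H.Adj q v := fun v hpv hvq ↦ by
  have hp : ∀ u, p < u → u < q → ¬ H.Adj p u := fun u hpu huq hadj ↦ by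
    obtain rfl : u = s := by
      have := hH.le_of_adj_of_adj (by omega) huq hqs hadj
      omega
    exact hH.not_adj_of_val_eq_add_one hs hadj
  have hjoin := fun u hpu huq hu ↦
    (hH.adj_or_adj_of_between (u := u) hpq hin hpu huq hu).resolve_left (hp u hpu huq)
  obtain ⟨t, ht⟩ : ∃ t : Fin n, (t : ℕ) + 1 = q :=
    ⟨⟨q - 1, by omega⟩, Nat.sub_add_cancel (by omega)⟩
  have hti : t = i := by
    by_contra hne
    have hqt := hjoin t (by omega) (by omega) fun h ↦ hne (hi (by omega) (by omega) h)
    exact hH.not_adj_of_val_eq_add_one ht.symm hqt.symm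
  refine hjoin v hpv (by omega) fun h ↦ ?_
  have := hi hpv (by omega) h
  omega

-- Here the vertex next to `p` is the isolated one, so the vertex next to `q` is joined to `p`.
theorem fan_left_of_not_adj (hH : IsDissection H) {p q i s : Fin n} (hpq : H.Adj p q)
    (hin : ∀ ⦃u v⦄, p < u → u < q → p < v → v < q → ¬ H.Adj u v)
    (hi : ∀ ⦃v⦄, p < v → v < q → H.IsIsolated v → v = i) (hs : (s : ℕ) = p + 1)
    (hqs : ¬ H.Adj q s) : ∀ v : Fin n, (p : ℕ) + 1 < v → v < q → H.Adj p v := fun v hpv hvq ↦ by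
  have hjoin := fun u ↦ hH.adj_or_adj_of_between (u := u) hpq hin
  have hsi : s = i := by
    by_contra hne
    have := hjoin s (by omega) (by omega) fun h ↦ hne (hi (by omega) (by omega) h)
    exact this.elim (hH.not_adj_of_val_eq_add_one hs) hqs
  have hnone : ∀ u : Fin n, (p : ℕ) + 1 < u → u < q → ¬ H.IsIsolated u := fun u hpu huq h ↦ by
    have := hi (by omega) huq h
    omega
  obtain ⟨t, ht⟩ : ∃ t : Fin n, (t : ℕ) + 1 = q :=
    ⟨⟨q - 1, by omega⟩, Nat.sub_add_cancel (by omega)⟩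
  have hqt : ¬ H.Adj q t := fun h ↦ hH.not_adj_of_val_eq_add_one ht.symm h.symm
  have hpt := (hjoin t (by omega) (by omega) (hnone t (by omega) (by omega))).resolve_right hqt
  refine (hjoin v (by omega) hvq (hnone v hpv hvq)).resolve_right fun hqv ↦ ?_
  obtain rfl : v = t := by
    have := hH.le_of_adj_of_adj (by omega) (by omega) hqv hpt
    omega
  exact hqt hqv

theorem fan_left_or_fan_right (hH : IsDissection H) {p q i : Fin n} (hpq : H.Adj p q)
    (hlt : p < q) (hin : ∀ ⦃u v⦄, p < u → u < q → p < v → v < q → ¬ H.Adj u v)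
    (hi : ∀ ⦃v⦄, p < v → v < q → H.IsIsolated v → v = i) :
    (∀ v : Fin n, (p : ℕ) + 1 < v → v < q → H.Adj p v) ∨
      ∀ v : Fin n, p < v → (v : ℕ) + 1 < q → H.Adj q v := by
  have hgap := hH.add_two_le hpq hlt
  obtain ⟨s, hs⟩ : ∃ s : Fin n, (s : ℕ) = p + 1 := ⟨⟨p + 1, by omega⟩, rfl⟩
  by_cases hqs : H.Adj q s
  · exact .inr (hH.fan_right_of_adj hpq hin hi hs hqs)
  · exact .inl (hH.fan_left_of_not_adj hpq hin hi hs hqs)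

open scoped Classical in
theorem le_card_filter_adj_Ioo (hH : IsDissection H) {p q i : Fin n} (hpq : H.Adj p q)
    (hlt : p < q) (hin : ∀ ⦃u v⦄, p < u → u < q → p < v → v < q → ¬ H.Adj u v)
    (hi : ∀ ⦃v⦄, p < v → v < q → H.IsIsolated v → v = i) :
    (q : ℕ) ≤ p + 2 + #{v ∈ Ioo p q | H.Adj p v} ∧
        (∀ v : Fin n, (p : ℕ) + 1 < v → v < q → H.Adj p v) ∨
      (q : ℕ) ≤ p + 2 + #{v ∈ Ioo p q | H.Adj q v} ∧
        ∀ v : Fin n, p < v → (v : ℕ) + 1 < q → H.Adj q v := by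
  have hgap := hH.add_two_le hpq hlt
  refine (hH.fan_left_or_fan_right hpq hlt hin hi).imp (fun hfan ↦ ⟨?_, hfan⟩)
    fun hfan ↦ ⟨?_, hfan⟩
  · have hsub : Ioo ⟨p + 1, by omega⟩ q ⊆ ({v ∈ Ioo p q | H.Adj p v} : Finset (Fin n)) :=
      fun v hv ↦ by
        simp only [mem_Ioo, mem_filter, Fin.lt_def] at hv ⊢
        exact ⟨by omega, hfan v (by omega) (by omega)⟩
    have := card_le_card hsub
    rw [Fin.card_Ioo] at this
    simp only at this
    omega
  · have hsub : Ioo p ⟨q - 1, by omega⟩ ⊆ ({v ∈ Ioo p q | H.Adj q v} : Finset (Fin n)) :=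
      fun v hv ↦ by
        simp only [mem_Ioo, mem_filter, Fin.lt_def] at hv ⊢
        exact ⟨by omega, hfan v (by omega) (by omega)⟩
    have := card_le_card hsub
    rw [Fin.card_Ioo] at this
    simp only at this
    omega

theorem comap_addLeft (hH : IsDissection H) (s : Fin n) :
    IsDissection (H.comap (Equiv.addLeft s)) where
  add_one_ne a b hab heq := hH.add_one_ne hab (by simp [← heq, add_assoc])
  le_of_adj a b c d hab hcd hac hcb := by
    by_contra! hbd
    simp only [comap_adj, Equiv.coe_addLeft] at hab hcd
    have h1 := hH.le_of_adj hab hcd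
    have h2 := hH.le_of_adj hcd hab.symm
    have h3 := hH.le_of_adj hab.symm hcd.symm
    have h4 := hH.le_of_adj hcd.symm hab
    simp only [Fin.lt_def, Fin.le_def, Fin.val_add_eq_ite] at *
    grind

theorem comap_subLeft (hH : IsDissection H) (s : Fin n) :
    IsDissection (H.comap (Equiv.subLeft s)) where
  add_one_ne a b hab heq := hH.add_one_ne hab.symm (by simp [← heq, sub_add_eq_sub_sub])
  le_of_adj a b c d hab hcd hac hcb := by
    by_contra! hbd
    simp only [comap_adj, Equiv.subLeft_apply] at hab hcd
    have h1 := hH.le_of_adj hab hcd.symm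
    have h2 := hH.le_of_adj hcd hab
    have h3 := hH.le_of_adj hab.symm hcd
    have h4 := hH.le_of_adj hcd.symm hab.symm
    simp only [Fin.lt_def, Fin.le_def, val_fin_sub_eq_ite] at *
    grind

end IsDissection

end Dissection

section Positions

variable {n : ℕ}

theorem sum_Ioi_eq_sum_Ioo_add (f : Fin n → ℕ) {a b : Fin n} (hab : a < b) :
    ∑ v ∈ Ioi a, f v = ∑ v ∈ Ioo a b, f v + f b + ∑ v ∈ Ioi b, f v := by
  have hsplit : Ioi a = Ioo a b ∪ insert b (Ioi b) := by
    ext v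
    simp only [mem_Ioi, mem_union, mem_Ioo, mem_insert]
    omega
  have hdisj : Disjoint (Ioo a b) (insert b (Ioi b)) :=
    disjoint_left.2 fun v hv hv' ↦ by
      simp only [mem_Ioo, mem_insert, mem_Ioi] at hv hv'
      omega
  rw [hsplit, sum_union hdisj, sum_insert notMem_Ioi_self, add_assoc]

theorem sum_eq_sum_Ioo_of_lt [NeZero n] (f : Fin n → ℕ) {x y z : Fin n} (hx : 0 < x) (hxy : x < y)
    (hyz : y < z) :
    ∑ v, f v = f 0 + f x + f y + f z + ∑ v ∈ Ioo 0 x, f v + ∑ v ∈ Ioo x y, f v +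
      ∑ v ∈ Ioo y z, f v + ∑ v ∈ Ioi z, f v := by
  have huniv : (univ : Finset (Fin n)) = insert 0 (Ioi 0) := by
    ext v
    simp only [mem_univ, mem_insert, mem_Ioi, Fin.pos_iff_ne_zero, true_iff]
    exact eq_or_ne v 0
  rw [huniv, sum_insert notMem_Ioi_self, sum_Ioi_eq_sum_Ioo_add f hx, sum_Ioi_eq_sum_Ioo_add f hxy,
    sum_Ioi_eq_sum_Ioo_add f hyz]
  ring

open scoped Classical in
theorem degree_eq_card_filter_Ioo_of_lt [NeZero n] (H : SimpleGraph (Fin n)) (v : Fin n)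
    {x y z : Fin n} (hx : 0 < x) (hxy : x < y) (hyz : y < z) :
    H.degree v = (if H.Adj v 0 then 1 else 0) + (if H.Adj v x then 1 else 0) +
      (if H.Adj v y then 1 else 0) + (if H.Adj v z then 1 else 0) +
      #{u ∈ Ioo 0 x | H.Adj v u} + #{u ∈ Ioo x y | H.Adj v u} + #{u ∈ Ioo y z | H.Adj v u} +
      #{u ∈ Ioi z | H.Adj v u} := by
  simp only [← card_neighborFinset_eq_degree, neighborFinset_eq_filter, card_filter,
    sum_eq_sum_Ioo_of_lt _ hx hxy hyz]

end Positions

section Model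

variable {n m : ℕ}

/-- The chords `i < j` of the type D1 graph with corners `0, …, 4 * m - 2`: four fans, whose apexes
`0`, `m + 1`, `2 * m + 1` and `3 * m + 1` are the hubs. -/
def IsD1Chord (m i j : ℕ) : Prop :=
  (i = 0 ∧ 2 ≤ j ∧ j ≤ m + 1) ∨ (i = m + 1 ∧ 3 * m + 1 ≤ j) ∨
    (j = 2 * m + 1 ∧ m + 1 ≤ i ∧ i + 1 ≤ 2 * m) ∨
    (j = 3 * m + 1 ∧ 2 * m + 1 ≤ i ∧ i + 1 ≤ 3 * m)

/-- The chord graph of the type D1 graph, on its corners in polygon order; the intended number of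
corners is `n = 4 * m - 1`. -/
def d1Model (n m : ℕ) : SimpleGraph (Fin n) :=
  fromRel fun i j ↦ IsD1Chord m i j

theorem isDissection_d1Model [NeZero n] (hm : 3 ≤ m) (hn : n + 1 = 4 * m) :
    IsDissection (d1Model n m) where
  add_one_ne a b hab heq := by
    have hone : ((1 : Fin n) : ℕ) = 1 := by rw [Fin.val_one', Nat.mod_eq_of_lt (by omega)]
    have hval := Fin.val_add_eq_ite a 1
    rw [heq, hone] at hval
    simp only [d1Model, IsD1Chord, fromRel_adj] at hab
    split_ifs at hval <;> omega
  le_of_adj a b c d hab hcd hac hcb := by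
    simp only [d1Model, IsD1Chord, fromRel_adj, Fin.lt_def, Fin.le_def] at *
    omega

theorem card_filter_val_mem {T : Finset ℕ} (hT : ∀ j ∈ T, j < n) :
    #{i : Fin n | (i : ℕ) ∈ T} = #T :=
  card_bij (fun i _ ↦ (i : ℕ)) (fun i hi ↦ (mem_filter.1 hi).2)
    (fun _ _ _ _ h ↦ Fin.ext h) fun j hj ↦ ⟨⟨j, hT j hj⟩, by simpa using hj, rfl⟩

open scoped Classical in
theorem degree_eq_card_of_adj_iff (H : SimpleGraph (Fin n)) (i : Fin n) {T : Finset ℕ}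
    (hT : ∀ j ∈ T, j < n) (hadj : ∀ j, H.Adj i j ↔ (j : ℕ) ∈ T) : H.degree i = #T := by
  rw [← card_neighborFinset_eq_degree, neighborFinset_eq_filter, ← card_filter_val_mem hT]
  simp only [hadj]

open scoped Classical in
theorem degree_d1Model_of_hub (hm : 3 ≤ m) (hn : n + 1 = 4 * m) {i : Fin n}
    (hi : (i : ℕ) ∈ ({0, m + 1, 2 * m + 1, 3 * m + 1} : Finset ℕ)) :
    (d1Model n m).degree i = m := by
  simp only [mem_insert, mem_singleton] at hi
  rcases hi with hi | hi | hi | hi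
  · rw [degree_eq_card_of_adj_iff (T := Icc 2 (m + 1))]
    · simp
    · simp only [mem_Icc]; omega
    · simp only [d1Model, IsD1Chord, fromRel_adj, ne_eq, Fin.ext_iff, mem_Icc]; omega
  · rw [degree_eq_card_of_adj_iff
      (T := insert 0 (insert (2 * m + 1) (Icc (3 * m + 1) (4 * m - 2))))]
    · rw [card_insert_of_notMem (by simp), card_insert_of_notMem (by simp only [mem_Icc]; omega),
        Nat.card_Icc]
      omega
    · simp only [mem_insert, mem_Icc]; omega
    · simp only [d1Model, IsD1Chord, fromRel_adj, ne_eq, Fin.ext_iff, mem_insert, mem_Icc]; omega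
  · rw [degree_eq_card_of_adj_iff (T := insert (3 * m + 1) (Icc (m + 1) (2 * m - 1)))]
    · rw [card_insert_of_notMem (by simp only [mem_Icc]; omega), Nat.card_Icc]
      omega
    · simp only [mem_insert, mem_Icc]; omega
    · simp only [d1Model, IsD1Chord, fromRel_adj, ne_eq, Fin.ext_iff, mem_insert, mem_Icc]; omega
  · rw [degree_eq_card_of_adj_iff (T := insert (m + 1) (Icc (2 * m + 1) (3 * m - 1)))]
    · rw [card_insert_of_notMem (by simp only [mem_Icc]; omega), Nat.card_Icc]
      omega
    · simp only [mem_insert, mem_Icc]; omega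
    · simp only [d1Model, IsD1Chord, fromRel_adj, ne_eq, Fin.ext_iff, mem_insert, mem_Icc]; omega

open scoped Classical in
theorem degree_d1Model_of_isolated (hm : 3 ≤ m) {i : Fin n}
    (hi : (i : ℕ) ∈ ({1, 2 * m, 3 * m} : Finset ℕ)) : (d1Model n m).degree i = 0 := by
  simp only [mem_insert, mem_singleton] at hi
  refine (degree_eq_zero ..).2 fun j hij ↦ ?_
  simp only [d1Model, IsD1Chord, fromRel_adj] at hij
  omega

open scoped Classical in
theorem degree_d1Model_of_leaf (hm : 3 ≤ m) (hn : n + 1 = 4 * m) {i : Fin n}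
    (hhub : (i : ℕ) ∉ ({0, m + 1, 2 * m + 1, 3 * m + 1} : Finset ℕ))
    (hiso : (i : ℕ) ∉ ({1, 2 * m, 3 * m} : Finset ℕ)) : (d1Model n m).degree i = 1 := by
  simp only [mem_insert, mem_singleton, not_or] at hhub hiso
  obtain ⟨h, hh, hadj⟩ : ∃ h < n, ∀ j, (d1Model n m).Adj i j ↔ (j : ℕ) = h := by
    simp only [d1Model, IsD1Chord, fromRel_adj, ne_eq, Fin.ext_iff]
    rcases (by omega : (i : ℕ) < m + 1 ∨ (m + 1 < (i : ℕ) ∧ (i : ℕ) < 2 * m + 1) ∨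
      (2 * m + 1 < (i : ℕ) ∧ (i : ℕ) < 3 * m + 1) ∨ 3 * m + 1 < (i : ℕ)) with hi | hi | hi | hi
    · exact ⟨0, by omega, fun j ↦ by omega⟩
    · exact ⟨2 * m + 1, by omega, fun j ↦ by omega⟩
    · exact ⟨3 * m + 1, by omega, fun j ↦ by omega⟩
    · exact ⟨m + 1, by omega, fun j ↦ by omega⟩
  rw [degree_eq_card_of_adj_iff (T := {h}) _ i (by simpa using hh) (by simpa using hadj),
    card_singleton]

theorem degMultiset_d1Model (hm : 3 ≤ m) (hn : n + 1 = 4 * m) :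
    degMultiset (d1Model n m) = d1ChordDegrees m := by
  classical
  let A : Finset (Fin n) := {i | (i : ℕ) ∈ ({0, m + 1, 2 * m + 1, 3 * m + 1} : Finset ℕ)}
  let B : Finset (Fin n) := {i | (i : ℕ) ∈ ({1, 2 * m, 3 * m} : Finset ℕ)}
  have hA : #A = 4 := by
    rw [card_filter_val_mem (by simp only [mem_insert, mem_singleton]; omega)]
    exact card_eq_four.2 ⟨0, m + 1, 2 * m + 1, 3 * m + 1, by omega, by omega, by omega, by omega,
      by omega, by omega, rfl⟩
  have hB : #B = 3 := by
    rw [card_filter_val_mem (by simp only [mem_insert, mem_singleton]; omega)]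
    exact card_eq_three.2 ⟨1, 2 * m, 3 * m, by omega, by omega, by omega, rfl⟩
  have hAB : Disjoint A B := disjoint_filter.2 fun i _ hi ↦ by
    simp only [mem_insert, mem_singleton] at hi ⊢
    omega
  rw [degMultiset_eq_map_degree, map_univ_val_eq_replicate hAB
    (fun i hi ↦ degree_d1Model_of_hub hm hn (mem_filter.1 hi).2)
    (fun i hi ↦ degree_d1Model_of_isolated hm (mem_filter.1 hi).2)
    fun i hiA hiB ↦ degree_d1Model_of_leaf hm hn (by simpa [A] using hiA) (by simpa [B] using hiB),
    hA, hB, Fintype.card_fin, d1ChordDegrees]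
  congr 3
  omega

end Model

section NormalForm

variable {n m : ℕ} [NeZero n] {H : SimpleGraph (Fin n)} {x y z : Fin n}

/-- The polygon dissection `H` has the type D1 degrees, and its hubs are, in their order along the
polygon, the corner `0` and `x`, `y`, `z`. -/
structure IsD1Dissection (m : ℕ) (H : SimpleGraph (Fin n)) (x y z : Fin n) : Prop where
  isDissection : IsDissection H
  degMultiset_eq : degMultiset H = d1ChordDegrees m
  hubs_eq : hubs H m = {0, x, y, z}
  pos : 0 < x
  lt_mid : x < y
  lt_last : y < z

namespace IsD1Dissection

open scoped Classical in
theorem four_le (hD : IsD1Dissection m H x y z) (hm : 3 ≤ m) :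
    4 ≤ (if H.Adj 0 x then 1 else 0) + (if H.Adj x y then 1 else 0) +
      (if H.Adj y z then 1 else 0) + (if H.Adj 0 z then 1 else 0) +
      (if H.Adj 0 y then 1 else 0) + (if H.Adj x z then 1 else 0) :=
  have hx := hD.pos
  have hxy := hD.lt_mid
  have hyz := hD.lt_last
  four_le_hub_adjacencies (by omega) hD.degMultiset_eq hD.hubs_eq hx.ne (hx.trans hxy).ne
    (hx.trans (hxy.trans hyz)).ne hxy.ne (hxy.trans hyz).ne hyz.ne

theorem exists_isIsolated_iff (hD : IsD1Dissection m H x y z) (hm : 3 ≤ m) (h0x : H.Adj 0 x)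
    (hxy : H.Adj x y) (hyz : H.Adj y z) :
    ∃ i j k, (0 < i ∧ i < x) ∧ (x < j ∧ j < y) ∧ (y < k ∧ k < z) ∧
      ∀ v, H.IsIsolated v ↔ v = i ∨ v = j ∨ v = k := by
  classical
  obtain ⟨i, h0i, hix, hi⟩ := hD.isDissection.exists_isIsolated_between h0x hD.pos
  obtain ⟨j, hxj, hjy, hj⟩ := hD.isDissection.exists_isIsolated_between hxy hD.lt_mid
  obtain ⟨k, hyk, hkz, hk⟩ := hD.isDissection.exists_isIsolated_between hyz hD.lt_last
  have hcard : #({i, j, k} : Finset (Fin n)) = 3 :=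
    card_eq_three.2 ⟨i, j, k, by omega, by omega, by omega, rfl⟩
  have heq : {i, j, k} = ({v | H.IsIsolated v} : Finset (Fin n)) := by
    refine eq_of_subset_of_card_le (fun v hv ↦ ?_)
      (by rw [card_isIsolated (by omega) hD.degMultiset_eq, hcard])
    simp only [mem_insert, mem_singleton] at hv
    rcases hv with rfl | rfl | rfl <;> simpa
  exact ⟨i, j, k, ⟨h0i, hix⟩, ⟨hxj, hjy⟩, ⟨hyk, hkz⟩,
    fun v ↦ by simpa using (Finset.ext_iff.1 heq v).symm⟩

theorem not_adj_zero_last (hD : IsD1Dissection m H x y z) (hm : 3 ≤ m) (h0x : H.Adj 0 x)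
    (hxy : H.Adj x y) (hyz : H.Adj y z) : ¬ H.Adj 0 z := fun h0z ↦ by
  obtain ⟨i, j, k, hi, hj, hk, hiso⟩ := hD.exists_isIsolated_iff hm h0x hxy hyz
  obtain ⟨u, hzu, hu⟩ := hD.isDissection.exists_isIsolated_gt h0z
  have := (hiso u).1 hu
  omega

section Normal

variable (hD : IsD1Dissection m H x y z) (hm : 3 ≤ m) (hxz : H.Adj x z) (h0z : ¬ H.Adj 0 z)

include hD hm hxz h0z

theorem hub_adj : ¬ H.Adj 0 y ∧ H.Adj 0 x ∧ H.Adj x y ∧ H.Adj y z := by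
  have h0y : ¬ H.Adj 0 y := fun h ↦
    (hD.isDissection.le_and_le hxz h.symm hD.lt_mid hD.lt_last).1.not_gt hD.pos
  have hfour := hD.four_le hm
  grind

theorem mem_hubs_of_adj {u v : Fin n} (hu : u ∉ hubs H m) (huv : H.Adj u v) : v ∈ hubs H m := by
  classical
  obtain ⟨h0y, h0x, hxy, hyz⟩ := hD.hub_adj hm hxz h0z
  refine _root_.mem_hubs_of_adj (by omega) hD.degMultiset_eq ?_ hu huv
  have h1 := hD.pos
  have h2 := hD.lt_mid
  have h3 := hD.lt_last
  rw [hD.hubs_eq, sum_card_neighborFinset_inter_quadruple (by omega) (by omega) (by omega)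
    (by omega) (by omega) (by omega)]
  simp [*]

theorem not_adj_of_ne_hub {u v : Fin n} (hu : u ≠ 0 ∧ u ≠ x ∧ u ≠ y ∧ u ≠ z)
    (hv : v ≠ 0 ∧ v ≠ x ∧ v ≠ y ∧ v ≠ z) : ¬ H.Adj u v := fun huv ↦ by
  have := hD.mem_hubs_of_adj hm hxz h0z (u := u) (v := v) (by simpa [hD.hubs_eq] using hu) huv
  simp only [hD.hubs_eq, mem_insert, mem_singleton] at this
  omega

theorem adj_of_gt {v : Fin n} (hv : z < v) : H.Adj x v := by
  obtain ⟨-, h0x, hxy, hyz⟩ := hD.hub_adj hm hxz h0z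
  have hx := hD.pos
  have hxy_lt := hD.lt_mid
  have hyz_lt := hD.lt_last
  obtain ⟨i, j, k, hi, hj, hk, hiso⟩ := hD.exists_isIsolated_iff hm h0x hxy hyz
  have hnone : ∀ u, z < u → ¬ H.IsIsolated u := fun u hu h ↦ by
    have := (hiso u).1 h
    omega
  obtain ⟨d, hvd⟩ := exists_adj_iff_not_isIsolated.2 (hnone v hv)
  have hd : d = 0 ∨ d = x ∨ d = y ∨ d = z := by
    by_contra hd
    exact hD.not_adj_of_ne_hub hm hxz h0z (by omega) (by omega) hvd
  rcases hd with rfl | rfl | rfl | rfl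
  · obtain ⟨u, hvu, hu⟩ := hD.isDissection.exists_isIsolated_gt hvd.symm
    exact (hnone u (hv.trans hvu) hu).elim
  · exact hvd.symm
  · exact ((hD.isDissection.le_and_le hxz hvd.symm hxy_lt hyz_lt).2.not_gt hv).elim
  · obtain ⟨u, hdu, -, hu⟩ := hD.isDissection.exists_isIsolated_between hvd.symm hv
    exact (hnone u hdu hu).elim

open scoped Classical in
theorem card_filter_adj_Ioi : #{v ∈ Ioi z | H.Adj x v} + z + 1 = n := by
  rw [filter_true_of_mem fun v hv ↦ hD.adj_of_gt hm hxz h0z (mem_Ioi.1 hv), Fin.card_Ioi]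
  omega

open scoped Classical in
theorem degree_sum_bounds :
    1 + #{v ∈ Ioo 0 x | H.Adj 0 v} ≤ m ∧
    3 + #{v ∈ Ioo 0 x | H.Adj x v} + #{v ∈ Ioo x y | H.Adj x v} + n ≤ m + z + 1 ∧
    2 + #{v ∈ Ioo x y | H.Adj y v} + #{v ∈ Ioo y z | H.Adj y v} ≤ m ∧
    2 + #{v ∈ Ioo y z | H.Adj z v} ≤ m := by
  obtain ⟨-, h0x, hxy, hyz⟩ := hD.hub_adj hm hxz h0z
  have hdeg : ∀ v ∈ ({0, x, y, z} : Finset (Fin n)), H.degree v = m := fun v hv ↦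
    mem_hubs.1 (hD.hubs_eq ▸ hv)
  simp only [degree_eq_card_filter_Ioo_of_lt H _ hD.pos hD.lt_mid hD.lt_last, forall_mem_insert,
    mem_singleton, forall_eq, h0x, hxy, hyz, hxz, h0x.symm, hxy.symm, hyz.symm, hxz.symm,
    if_true] at hdeg
  have hlast := hD.card_filter_adj_Ioi hm hxz h0z
  omega

-- The three fans and the last arc contribute exactly `4 * m` to the degrees of the hubs, so the
-- bounds are tight; `z` and then `y` and `0` can only reach degree `m` as apexes of their fans.
theorem position_and_fans (hn : n + 1 = 4 * m) :
    ((x : ℕ) = m + 1 ∧ (y : ℕ) = 2 * m + 1 ∧ (z : ℕ) = 3 * m + 1) ∧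
      (∀ v : Fin n, 1 < (v : ℕ) → v < x → H.Adj 0 v) ∧
      (∀ v : Fin n, x < v → (v : ℕ) + 1 < y → H.Adj y v) ∧
      ∀ v : Fin n, y < v → (v : ℕ) + 1 < z → H.Adj z v := by
  classical
  obtain ⟨-, h0x, hxy, hyz⟩ := hD.hub_adj hm hxz h0z
  obtain ⟨i, j, k, hi, hj, hk, hiso⟩ := hD.exists_isIsolated_iff hm h0x hxy hyz
  have hpos := hD.pos
  have hmid := hD.lt_mid
  have hlast := hD.lt_last
  have harc0 := hD.isDissection.le_card_filter_adj_Ioo (i := i) h0x hpos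
    (fun u v _ _ _ _ ↦ hD.not_adj_of_ne_hub hm hxz h0z (by omega) (by omega))
    fun v _ _ hv ↦ by have := (hiso v).1 hv; omega
  have harcx := hD.isDissection.le_card_filter_adj_Ioo (i := j) hxy hmid
    (fun u v _ _ _ _ ↦ hD.not_adj_of_ne_hub hm hxz h0z (by omega) (by omega))
    fun v _ _ hv ↦ by have := (hiso v).1 hv; omega
  have harcy := hD.isDissection.le_card_filter_adj_Ioo (i := k) hyz hlast
    (fun u v _ _ _ _ ↦ hD.not_adj_of_ne_hub hm hxz h0z (by omega) (by omega))
    fun v _ _ hv ↦ by have := (hiso v).1 hv; omega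
  simp only [Fin.val_zero, zero_add] at harc0
  have hbounds := hD.degree_sum_bounds hm hxz h0z
  rcases harc0 with ⟨hc0, hfan0⟩ | ⟨hc0, -⟩ <;> rcases harcx with ⟨hcx, -⟩ | ⟨hcx, hfanx⟩ <;>
    rcases harcy with ⟨hcy, -⟩ | ⟨hcy, hfany⟩ <;> try omega
  exact ⟨by omega, hfan0, hfanx, hfany⟩

theorem adj_of_isD1Chord (hn : n + 1 = 4 * m) {i j : Fin n} (hij : IsD1Chord m i j) :
    H.Adj i j := by
  obtain ⟨-, h0x, hxy, hyz⟩ := hD.hub_adj hm hxz h0z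
  obtain ⟨⟨hx, hy, hz⟩, hfan0, hfany, hfanz⟩ := hD.position_and_fans hm hxz h0z hn
  rcases hij with ⟨hi, hj⟩ | ⟨hi, hj⟩ | ⟨hj, hi⟩ | ⟨hj, hi⟩
  · obtain rfl : i = 0 := Fin.ext hi
    rcases eq_or_ne j x with rfl | hjx
    exacts [h0x, hfan0 j (by omega) (by omega)]
  · obtain rfl : i = x := by omega
    rcases eq_or_ne j z with rfl | hjz
    exacts [hxz, hD.adj_of_gt hm hxz h0z (by omega)]
  · obtain rfl : j = y := by omega
    rcases eq_or_ne i x with rfl | hix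
    exacts [hxy, (hfany i (by omega) (by omega)).symm]
  · obtain rfl : j = z := by omega
    rcases eq_or_ne i y with rfl | hiy
    exacts [hyz, (hfanz i (by omega) (by omega)).symm]

theorem eq_d1Model (hn : n + 1 = 4 * m) : H = d1Model n m := by
  refine (eq_of_le_of_degMultiset_eq (fun i j hij ↦ ?_) ?_).symm
  · have hadj := fun i j ↦ hD.adj_of_isD1Chord hm hxz h0z hn (i := i) (j := j)
    exact hij.2.elim (hadj i j) fun hji ↦ (hadj j i hji).symm
  · rw [degMultiset_d1Model hm hn, hD.degMultiset_eq]

end Normal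

end IsD1Dissection

end NormalForm

section Symmetry

variable {n m : ℕ} [NeZero n] {H K : SimpleGraph (Fin n)} {x y z : Fin n}

/-- `K` is the image of `H` under a symmetry of the polygon with corners `0, 1, …, n - 1`, which
may be any automorphism of its boundary cycle. -/
def PolygonEquiv (H K : SimpleGraph (Fin n)) : Prop :=
  ∃ e : Equiv.Perm (Fin n), (circulantGraph {1}).comap e = circulantGraph {1} ∧ H.comap e = K

namespace PolygonEquiv

theorem of_eq (h : H = K) : PolygonEquiv H K :=
  ⟨Equiv.refl _, comap_id, comap_id.trans h⟩

theorem of_comap {e : Equiv.Perm (Fin n)} (he : (circulantGraph {1}).comap e = circulantGraph {1})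
    (h : PolygonEquiv (H.comap e) K) : PolygonEquiv H K := by
  obtain ⟨f, hf, rfl⟩ := h
  refine ⟨f.trans e, ?_, ?_⟩
  · rw [Equiv.coe_trans, ← comap_comap, he, hf]
  · rw [Equiv.coe_trans, ← comap_comap]

theorem of_comap_addLeft (s : Fin n) (h : PolygonEquiv (H.comap (Equiv.addLeft s)) K) :
    PolygonEquiv H K :=
  of_comap (by ext a b; simp [circulantGraph_adj]) h

theorem of_comap_subLeft (s : Fin n) (h : PolygonEquiv (H.comap (Equiv.subLeft s)) K) :
    PolygonEquiv H K :=
  of_comap (by ext a b; simp [circulantGraph_adj, or_comm]) h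

theorem nonempty_iso_sup (h : PolygonEquiv H K) :
    Nonempty ((circulantGraph {1} ⊔ H : SimpleGraph (Fin n)) ≃g
      (circulantGraph {1} ⊔ K : SimpleGraph (Fin n))) := by
  obtain ⟨e, he, rfl⟩ := h
  have hsup : (circulantGraph {1} ⊔ H).comap e = circulantGraph {1} ⊔ H.comap e := by
    nth_rw 2 [← he]
    rfl
  exact ⟨(hsup ▸ Iso.comap e _).symm⟩

end PolygonEquiv

namespace IsD1Dissection

theorem rotate (hD : IsD1Dissection m H x y z) :
    IsD1Dissection m (H.comap (Equiv.addLeft x)) (y - x) (z - x) (0 - x) := by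
  have hx := hD.pos
  have hxy := hD.lt_mid
  have hyz := hD.lt_last
  refine ⟨hD.isDissection.comap_addLeft x,
    (degMultiset_congr (Iso.comap _ _)).trans hD.degMultiset_eq, ?_, ?_, ?_, ?_⟩
  · ext v
    rw [mem_hubs_comap, hD.hubs_eq]
    simp only [mem_insert, mem_singleton, Equiv.coe_addLeft]
    grind
  all_goals
    rw [Fin.lt_def]
    simp only [val_fin_sub_eq_ite, Fin.val_zero]
    grind

theorem reflect (hD : IsD1Dissection m H x y z) :
    IsD1Dissection m (H.comap (Equiv.subLeft z)) (z - y) (z - x) z := by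
  have hx := hD.pos
  have hxy := hD.lt_mid
  have hyz := hD.lt_last
  refine ⟨hD.isDissection.comap_subLeft z,
    (degMultiset_congr (Iso.comap _ _)).trans hD.degMultiset_eq, ?_, ?_, ?_, ?_⟩
  · ext v
    rw [mem_hubs_comap, hD.hubs_eq]
    simp only [mem_insert, mem_singleton, Equiv.subLeft_apply]
    grind
  all_goals
    rw [Fin.lt_def]
    simp only [val_fin_sub_eq_ite, Fin.val_zero]
    grind

theorem polygonEquiv_of_not_adj_zero_last (hD : IsD1Dissection m H x y z) (hm : 3 ≤ m)
    (hn : n + 1 = 4 * m) (h0z : ¬ H.Adj 0 z) : PolygonEquiv H (d1Model n m) := by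
  by_cases hxz : H.Adj x z
  · exact .of_eq (hD.eq_d1Model hm hxz h0z hn)
  · have h0y : H.Adj 0 y := by
      have hfour := hD.four_le hm
      grind
    refine .of_comap_subLeft z (.of_eq (hD.reflect.eq_d1Model hm ?_ ?_ hn))
    · simpa using h0y.symm
    · simpa [H.adj_comm] using h0z

theorem polygonEquiv (hD : IsD1Dissection m H x y z) (hm : 3 ≤ m) (hn : n + 1 = 4 * m) :
    PolygonEquiv H (d1Model n m) := by
  by_cases h0x : H.Adj 0 x
  · by_cases hxy : H.Adj x y
    · by_cases hyz : H.Adj y z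
      · exact hD.polygonEquiv_of_not_adj_zero_last hm hn (hD.not_adj_zero_last hm h0x hxy hyz)
      · refine .of_comap_addLeft x (.of_comap_addLeft _ (.of_comap_addLeft _
          (hD.rotate.rotate.rotate.polygonEquiv_of_not_adj_zero_last hm hn ?_)))
        simpa [H.adj_comm] using hyz
    · refine .of_comap_addLeft x (.of_comap_addLeft _
        (hD.rotate.rotate.polygonEquiv_of_not_adj_zero_last hm hn ?_))
      simpa [H.adj_comm] using hxy
  · refine .of_comap_addLeft x (hD.rotate.polygonEquiv_of_not_adj_zero_last hm hn ?_)
    simpa [H.adj_comm] using h0x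

end IsD1Dissection

theorem IsDissection.polygonEquiv_d1Model (hH : IsDissection H) (hm : 3 ≤ m) (hn : n + 1 = 4 * m)
    (hdeg : degMultiset H = d1ChordDegrees m) : PolygonEquiv H (d1Model n m) := by
  obtain ⟨a, b, c, d, hab, hbc, hcd, hhubs⟩ :=
    exists_lt_lt_lt_of_card_eq_four (card_hubs (by omega) hdeg)
  have hD : IsD1Dissection m (H.comap (Equiv.addLeft a)) (b - a) (c - a) (d - a) := by
    refine ⟨hH.comap_addLeft a, (degMultiset_congr (Iso.comap _ _)).trans hdeg, ?_, ?_, ?_, ?_⟩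
    · ext v
      rw [mem_hubs_comap, hhubs]
      simp only [mem_insert, mem_singleton, Equiv.coe_addLeft]
      grind
    all_goals
      rw [Fin.lt_def]
      simp only [val_fin_sub_eq_ite, Fin.val_zero]
      grind
  exact .of_comap_addLeft a (hD.polygonEquiv hm hn)

end Symmetry

section Outerplane

variable {n : ℕ}

theorem cross_mk_iff {a b c d : ZMod n} : Cross n s(a, b) s(c, d) ↔
    Xor (Between n a b c) (Between n a b d) ∧ Xor (Between n b a c) (Between n b a d) := by
  refine ⟨fun h ↦ ⟨h a b c d rfl rfl, h b a c d Sym2.eq_swap rfl⟩, ?_⟩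
  rintro ⟨hab, hba⟩ a' b' c' d' he hf
  rcases Sym2.eq_iff.1 he with ⟨rfl, rfl⟩ | ⟨rfl, rfl⟩ <;>
    rcases Sym2.eq_iff.1 hf with ⟨rfl, rfl⟩ | ⟨rfl, rfl⟩ <;>
    first | assumption | exact (_root_.xor_comm _ _).mp ‹_›

theorem isCycleEdge_mk_iff {a b : ZMod n} : IsCycleEdge n s(a, b) ↔ a + 1 = b ∨ b + 1 = a := by
  simp only [IsCycleEdge, Sym2.eq_iff]
  grind

theorem edgeSet_circulantGraph_one (hn : 1 < n) :
    (circulantGraph {1} : SimpleGraph (ZMod n)).edgeSet = {e | IsCycleEdge n e} := by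
  have : Fact (1 < n) := ⟨hn⟩
  ext e
  induction e with | _ a b
  rw [mem_edgeSet, Set.mem_ofPred_eq, isCycleEdge_mk_iff]
  simp only [circulantGraph_adj, Set.mem_singleton_iff, sub_eq_iff_eq_add']
  have hne : ∀ c : ZMod n, c + 1 ≠ c := fun c ↦ by simp
  grind

variable [NeZero n] {H : SimpleGraph (Fin n)} {G : SimpleGraph (ZMod n)}

theorem val_finEquiv (i : Fin n) : (ZMod.finEquiv n i).val = i := by
  cases n
  · exact i.elim0
  · rfl

theorem between_finEquiv_iff {a b v : Fin n} :
    Between n (ZMod.finEquiv n a) (ZMod.finEquiv n b) (ZMod.finEquiv n v) ↔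
      a < v ∧ v < b ∨ v < b ∧ b < a ∨ b < a ∧ a < v := by
  simp only [Between, ← map_sub, val_finEquiv, val_fin_sub_eq_ite, Fin.lt_def]
  grind

theorem cross_finEquiv_iff {a b c d : Fin n} (hab : a < b) :
    Cross n s(ZMod.finEquiv n a, ZMod.finEquiv n b) s(ZMod.finEquiv n c, ZMod.finEquiv n d) ↔
      a < c ∧ c < b ∧ (d < a ∨ b < d) ∨ a < d ∧ d < b ∧ (c < a ∨ b < c) := by
  simp only [cross_mk_iff, between_finEquiv_iff, xor_def]
  grind

theorem IsDissection.not_cross (hH : IsDissection H) {a b c d : Fin n} (hab : H.Adj a b)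
    (hcd : H.Adj c d) : ¬ Cross n s(ZMod.finEquiv n a, ZMod.finEquiv n b)
      s(ZMod.finEquiv n c, ZMod.finEquiv n d) := by
  wlog hlt : a < b generalizing a b
  · rw [Sym2.eq_swap]
    exact this hab.symm (hab.ne.symm.lt_of_le (not_lt.1 hlt))
  have hc := hH.le_and_le hab hcd (c := c)
  have hd := hH.le_and_le hab hcd.symm (c := d)
  rw [cross_finEquiv_iff hlt]
  omega

theorem nonCrossingChords_edgeSet_iff :
    NonCrossingChords n G.edgeSet ↔ IsDissection (G.comap (ZMod.finEquiv n)) := by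
  constructor
  · rintro ⟨hchord, hcross⟩
    refine ⟨fun a b hab heq ↦ (hchord _ hab).2 (isCycleEdge_mk_iff.2 (.inl ?_)),
      fun a b c d hab hcd hac hcb ↦ ?_⟩
    · rw [← heq, map_add, map_one]
    · by_contra! hbd
      refine hcross _ hab _ hcd (fun heq ↦ ?_)
        ((cross_finEquiv_iff (hac.trans hcb)).2 (.inl ⟨hac, hcb, .inr hbd⟩))
      simp only [Sym2.eq_iff, EmbeddingLike.apply_eq_iff_eq] at heq
      omega
  · refine fun hH ↦ ⟨fun e he ↦ ⟨not_isDiag_of_mem_edgeSet G he, ?_⟩, fun e he f hf _ ↦ ?_⟩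
    · rintro ⟨i, rfl⟩
      obtain ⟨a, rfl⟩ := (ZMod.finEquiv n).surjective i
      rw [← map_one (ZMod.finEquiv n), ← map_add] at he
      exact hH.add_one_ne he rfl
    · induction e with | _ a b
      induction f with | _ c d
      obtain ⟨a, rfl⟩ := (ZMod.finEquiv n).surjective a
      obtain ⟨b, rfl⟩ := (ZMod.finEquiv n).surjective b
      obtain ⟨c, rfl⟩ := (ZMod.finEquiv n).surjective c
      obtain ⟨d, rfl⟩ := (ZMod.finEquiv n).surjective d
      exact hH.not_cross he hf

theorem comap_circulantGraph_one :
    (circulantGraph {1}).comap (ZMod.finEquiv n) = circulantGraph {1} := by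
  ext a b
  simp [circulantGraph_adj, ← map_sub]

theorem IsOuterplane.exists_isDissection (hn : 1 < n) (hG : IsOuterplane n G) :
    ∃ H, IsDissection H ∧ G.comap (ZMod.finEquiv n) = circulantGraph {1} ⊔ H := by
  obtain ⟨S, hS, hGS⟩ := hG
  have hedge : (chordGraph n S).edgeSet = S := by
    rw [chordGraph, edgeSet_fromEdgeSet, sdiff_eq_left, Set.disjoint_left]
    exact fun e he ↦ (hS.1 e he).1
  refine ⟨_, nonCrossingChords_edgeSet_iff.1 (hedge ▸ hS), ?_⟩
  rw [← comap_circulantGraph_one, show G = circulantGraph {1} ⊔ chordGraph n S from ?_]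
  · rfl
  · rw [← edgeSet_inj, edgeSet_sup, edgeSet_circulantGraph_one hn, hedge, hGS]

theorem IsDissection.isOuterplane (hn : 1 < n) (hH : IsDissection H) :
    IsOuterplane n ((circulantGraph {1} ⊔ H).comap (ZMod.finEquiv n).symm) := by
  refine ⟨(H.comap (ZMod.finEquiv n).symm).edgeSet, nonCrossingChords_edgeSet_iff.2 ?_, ?_⟩
  · convert hH
    ext a b
    simp
  · rw [← edgeSet_circulantGraph_one hn, ← edgeSet_sup]
    congr 1
    ext a b
    simp [circulantGraph_adj, ← map_sub]

theorem degreeMultiset_eq_degMultiset_comap (G : SimpleGraph (ZMod n)) :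
    degreeMultiset n G = degMultiset (G.comap (ZMod.finEquiv n)) := by
  rw [degreeMultiset, dif_neg (NeZero.ne n)]
  exact (degMultiset_congr (Iso.comap (ZMod.finEquiv n).toEquiv G)).symm

theorem IsDissection.disjoint_circulantGraph_one (hH : IsDissection H) :
    Disjoint (circulantGraph {1}) H := by
  rw [SimpleGraph.disjoint_left]
  rintro a b ⟨-, h | h⟩ hab
  · exact hH.add_one_ne hab.symm (by rw [← eq_sub_iff_add_eq', h])
  · exact hH.add_one_ne hab (by rw [← eq_sub_iff_add_eq', h])

theorem degree_circulantGraph_one (hn : 3 ≤ n) (v : Fin n)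
    [Fintype ((circulantGraph {1}).neighborSet v)] : (circulantGraph {1}).degree v = 2 := by
  obtain ⟨k, rfl⟩ : ∃ k, n = k + 3 := ⟨n - 3, by omega⟩
  rw [← cycleGraph_degree_three_le (v := v)]
  congr!
  exact (cycleGraph_eq_circulantGraph _).symm

theorem IsDissection.degMultiset_sup (hn : 3 ≤ n) (hH : IsDissection H) :
    degMultiset (circulantGraph {1} ⊔ H) = (degMultiset H).map (· + 2) := by
  classical
  rw [degMultiset_eq_map_degree, degMultiset_eq_map_degree, Multiset.map_map]
  refine Multiset.map_congr rfl fun v _ ↦ ?_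
  have hdeg := degree_sup_of_disjoint v hH.disjoint_circulantGraph_one
  rw [degree_circulantGraph_one hn, add_comm] at hdeg
  rw [Function.comp_apply]
  convert hdeg

theorem map_add_two_d1ChordDegrees (m : ℕ) : (d1ChordDegrees m).map (· + 2) =
    Multiset.replicate 4 (m + 2) + Multiset.replicate (4 * m - 8) 3 + Multiset.replicate 3 2 := by
  simp only [d1ChordDegrees, Multiset.map_add, Multiset.map_replicate]

theorem IsOuterplane.nonempty_iso {m : ℕ} (hG : IsOuterplane n G) (hm : 3 ≤ m)
    (hn : n + 1 = 4 * m) (hdeg : degreeMultiset n G = (d1ChordDegrees m).map (· + 2)) :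
    Nonempty (G ≃g (circulantGraph {1} ⊔ d1Model n m : SimpleGraph (Fin n))) := by
  obtain ⟨H, hH, hGH⟩ := hG.exists_isDissection (by omega)
  rw [degreeMultiset_eq_degMultiset_comap, hGH, hH.degMultiset_sup (by omega)] at hdeg
  obtain ⟨e⟩ := (hH.polygonEquiv_d1Model hm hn
    (Multiset.map_injective (add_left_injective 2) hdeg)).nonempty_iso_sup
  exact ⟨(hGH ▸ Iso.comap (ZMod.finEquiv n).toEquiv G).symm.trans e⟩

end Outerplane

/-- Type D1 of the paper's Theorem 2: for `p ≥ 12` divisible by `4` and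
`n = p - 1`, the multiset `{(p/4+2)^4, 3^(p-8), 2^3}` is outerplane-unigraphic. -/
theorem unigraphic_D1 (p : ℕ) (hp : 12 ≤ p) (hdvd : 4 ∣ p) :
    OuterplaneUnigraphic (p - 1)
      (Multiset.replicate 4 (p / 4 + 2) +
        Multiset.replicate (p - 8) 3 + Multiset.replicate 3 2) := by
  obtain ⟨m, rfl⟩ := hdvd
  have hm : 3 ≤ m := by omega
  have hn : 4 * m - 1 + 1 = 4 * m := by omega
  have : NeZero (4 * m - 1) := ⟨by omega⟩
  rw [Nat.mul_div_cancel_left m four_pos, ← map_add_two_d1ChordDegrees]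
  refine ⟨⟨_, (isDissection_d1Model hm hn).isOuterplane (by omega), ?_⟩,
    fun G G' hG hG' hdeg hdeg' ↦ ?_⟩
  · rw [degreeMultiset_eq_degMultiset_comap, comap_comap,
      ← degMultiset_d1Model hm hn, ← (isDissection_d1Model hm hn).degMultiset_sup (by omega)]
    congr
    ext a b
    simp
  · obtain ⟨e⟩ := hG.nonempty_iso hm hn hdeg
    obtain ⟨e'⟩ := hG'.nonempty_iso hm hn hdeg'
    exact ⟨e.trans e'.symm⟩
end

section
/- Let n ≥ 3 and let S be a nonempty set of pairwise non-crossing chords of the standard n-cycle. Then at least two vertices of ZMod n are chord-free for S, i.e. incident to no chord of S. (This is the first assertion of the paper's Lemma 2: a 3-polytope of radius 1 has at least two vertices of degree three.) -/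
/-!
Call `Set.cIoo a b` the arc of the chord `s(a, b)` directed from `a` to `b`. Every such arc contains
a chord-free vertex: `a + 1` lies in it, and if `a + 1` is the end of a chord `s(a + 1, d)`, then by
non-crossing `d` lies in the arc or equals `b`, so the arc from `a + 1` to `d` is strictly smaller
and induction applies. The two arcs of any chord are disjoint, so they give two chord-free vertices.
-/

section CircularOrder

variable {α : Type*} [CircularOrder α] {a b c : α}

lemma sbtw_of_btw_of_ne (h : btw a b c) (hab : a ≠ b) (hbc : b ≠ c) (hca : c ≠ a) : sbtw a b c :=
  sbtw_iff_not_btw.2 fun h' => by simpa [hab, hbc, hca] using h.antisymm h'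

lemma cIoo_subset_cIoo_left (h : sbtw a b c) : Set.cIoo b c ⊆ Set.cIoo a c :=
  fun _ hx => h.trans_left hx

lemma cIoo_subset_cIoo_right (h : btw a b c) (hca : c ≠ a) : Set.cIoo a b ⊆ Set.cIoo a c := by
  intro x (hx : sbtw a x b)
  obtain rfl | hab := eq_or_ne a b
  · exact absurd hx sbtw_irrefl_left_right
  obtain rfl | hbc := eq_or_ne b c
  · exact hx
  exact hx.trans_right (sbtw_of_btw_of_ne h hab hbc hca)

lemma disjoint_cIoo_swap (a b : α) : Disjoint (Set.cIoo a b) (Set.cIoo b a) :=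
  Set.disjoint_left.2 fun _ hab hba => sbtw_asymm hab hba

end CircularOrder

section ZMod

variable {n : ℕ} {a b c d : ZMod n} {S : Set (Sym2 (ZMod n))}

lemma IsChord.symm (h : IsChord n s(a, b)) : IsChord n s(b, a) :=
  Sym2.eq_swap ▸ h

lemma IsChord.ne' (h : IsChord n s(a, b)) : b ≠ a :=
  fun hba => h.1 (Sym2.mk_isDiag_iff.2 hba.symm)

lemma IsChord.ne_add_one (h : IsChord n s(a, b)) : b ≠ a + 1 :=
  fun hb => h.2 ⟨a, by rw [hb]⟩

variable [NeZero n]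

lemma zmod_val_sub (a b : ZMod n) :
    (a - b).val = if a.val < b.val then n + a.val - b.val else a.val - b.val := by
  split_ifs with h
  · cases n with
    | zero => exact absurd rfl (NeZero.ne 0)
    | succ n => exact Fin.coe_sub_iff_lt.2 h
  · exact ZMod.val_sub (not_lt.1 h)

lemma zmod_sbtw_iff : sbtw a b c ↔
    a.val < b.val ∧ b.val < c.val ∨ b.val < c.val ∧ c.val < a.val ∨
      c.val < a.val ∧ a.val < b.val := by
  cases n with
  | zero => exact absurd rfl (NeZero.ne 0)
  | succ n => exact Fin.sbtw_iff

lemma between_iff_sbtw : Between n a b c ↔ sbtw a c b := by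
  have ha := a.val_lt
  have hb := b.val_lt
  have hc := c.val_lt
  rw [Between, zmod_sbtw_iff, zmod_val_sub, zmod_val_sub]
  split_ifs <;> omega

lemma sbtw_self_add_one_of_ne (hba : b ≠ a) (hb : b ≠ a + 1) : sbtw a (a + 1) b := by
  have : Nontrivial (ZMod n) := nontrivial_of_ne b a hba
  have one_val_le : (1 : ZMod n).val ≤ 1 := ZMod.val_one_eq_one_mod n ▸ Nat.mod_le 1 n
  have sub_val_pos : 0 < (b - a).val := ZMod.val_pos.2 (sub_ne_zero.2 hba)
  have sub_val_ne : (b - a).val ≠ (1 : ZMod n).val :=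
    fun h => hb (sub_eq_iff_eq_add'.1 (ZMod.val_injective n h))
  rw [← between_iff_sbtw, Between, add_sub_cancel_left]
  exact ⟨ZMod.val_pos.2 one_ne_zero, by omega⟩

lemma IsChord.sbtw_self_add_one (h : IsChord n s(a, b)) : sbtw a (a + 1) b :=
  sbtw_self_add_one_of_ne h.ne' h.ne_add_one

lemma cross_of_sbtw (hc : sbtw a c b) (hd : sbtw b d a) : Cross n s(a, b) s(c, d) := by
  intro a' b' c' d' hab hcd
  rw [between_iff_sbtw, between_iff_sbtw]
  rcases Sym2.eq_iff.1 hab with ⟨rfl, rfl⟩ | ⟨rfl, rfl⟩ <;>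
    rcases Sym2.eq_iff.1 hcd with ⟨rfl, rfl⟩ | ⟨rfl, rfl⟩
  · exact .inl ⟨hc, hd.not_sbtw⟩
  · exact .inr ⟨hc, hd.not_sbtw⟩
  · exact .inr ⟨hd, hc.not_sbtw⟩
  · exact .inl ⟨hd, hc.not_sbtw⟩

lemma NonCrossingChords.btw_of_sbtw (hS : NonCrossingChords n S) (hab : s(a, b) ∈ S)
    (hcd : s(c, d) ∈ S) (hc : sbtw a c b) : btw a d b := by
  have hne : s(a, b) ≠ s(c, d) := by
    intro h
    obtain rfl | rfl : c = a ∨ c = b := Sym2.mem_iff.1 (h ▸ Sym2.mem_mk_left c d)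
    · exact sbtw_irrefl_left hc
    · exact sbtw_irrefl_right hc
  exact btw_iff_not_sbtw.2 fun hd => hS.2 _ hab _ hcd hne (cross_of_sbtw hc hd)

lemma NonCrossingChords.cIoo_add_one_ssubset (hS : NonCrossingChords n S) (hab : s(a, b) ∈ S)
    (had : s(a + 1, d) ∈ S) : Set.cIoo (a + 1) d ⊂ Set.cIoo a b := by
  have hsucc_b : sbtw a (a + 1) b := (hS.1 _ hab).sbtw_self_add_one
  have hda : d ≠ a := fun h => (hS.1 _ had).symm.ne_add_one (h ▸ rfl)
  have hsucc_d : sbtw a (a + 1) d := sbtw_self_add_one_of_ne hda (hS.1 _ had).ne'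
  refine (Set.ssubset_iff_of_subset ?_).2 ⟨a + 1, hsucc_b, sbtw_irrefl_left⟩
  calc
    Set.cIoo (a + 1) d ⊆ Set.cIoo a d := cIoo_subset_cIoo_left hsucc_d
    _ ⊆ Set.cIoo a b := cIoo_subset_cIoo_right (hS.btw_of_sbtw hab had hsucc_b) (hS.1 _ hab).ne'

lemma NonCrossingChords.exists_mem_cIoo_chordFree (hS : NonCrossingChords n S)
    (hab : s(a, b) ∈ S) : ∃ v ∈ Set.cIoo a b, ChordFree n S v := by
  induction harc : Set.cIoo a b using WellFoundedLT.induction generalizing a b with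
  | ind arc ih =>
    subst harc
    by_cases hfree : ChordFree n S (a + 1)
    · exact ⟨a + 1, (hS.1 _ hab).sbtw_self_add_one, hfree⟩
    obtain ⟨d, had⟩ : ∃ d, s(a + 1, d) ∈ S := by
      simp only [ChordFree, not_forall, not_not] at hfree
      obtain ⟨_, he, d, rfl⟩ := hfree
      exact ⟨d, he⟩
    have hssub := hS.cIoo_add_one_ssubset hab had
    obtain ⟨v, hv, hvfree⟩ := ih _ hssub had rfl
    exact ⟨v, hssub.subset hv, hvfree⟩

end ZMod

/-- First assertion of the paper's Lemma 2: a nonempty set of pairwise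
non-crossing chords of the standard `n`-cycle leaves at least two chord-free
vertices. -/
theorem two_chord_free (n : ℕ) (hn : 3 ≤ n) (S : Set (Sym2 (ZMod n)))
    (hS : NonCrossingChords n S) (hne : S.Nonempty) :
    ∃ v w : ZMod n, v ≠ w ∧ ChordFree n S v ∧ ChordFree n S w := by
  have : NeZero n := ⟨by omega⟩
  obtain ⟨a, b, hab⟩ := Sym2.exists.1 hne
  obtain ⟨v, hv, hvfree⟩ := hS.exists_mem_cIoo_chordFree hab
  obtain ⟨w, hw, hwfree⟩ := hS.exists_mem_cIoo_chordFree (Sym2.eq_swap ▸ hab)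
  exact ⟨v, w, (disjoint_cIoo_swap a b).ne_of_mem hv hw, hvfree, hwfree⟩
end
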